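/- Let q be the braiding matrix of type g(2,3) with Dynkin diagram the chain on vertices 1,2,3 with all three vertices labeled −1 and both edges labeled ξ, where ξ ∈ G_3'. Set x_u = [[x_{12}, x_{123}]_c, x_2]_c and x_v = [[x_{123}, x_{23}]_c, x_2]_c. Then in every pre-Nichols algebra B of q with finite GKdim one has [x_1, x_u]_c = [x_v, x_3]_c = [x_u, x_3]_c = [x_1, x_v]_c = 0. -/

import Mathlib

/-
Common framework for formalizing statements from
"Finite GK-dimensional pre-Nichols algebras of (super)modular and unidentified type"
(Angiono, Campagnolo, Sanmarco).

We work over `ℂ` (an algebraically closed field of characteristic zero).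
A braiding matrix is `q : Fin θ → Fin θ → ℂˣ`.  The tensor algebra `T(V)` of the
associated braided vector space of diagonal type is realized as the free algebra
on `Fin θ`.  The braided bialgebra structure on `T(V)` (the braided coproduct,
uniquely determined by the braiding matrix) is packaged in the structure
`BraidedStr`: its fields characterize it uniquely, so quantifying over
`S : BraidedStr θ q` is equivalent to using "the" braided coproduct.

A pre-Nichols algebra of `q` is the quotient `T(V)/I` by an ℕ₀-homogeneous
(two-sided) braided bi-ideal `I` generated in degrees ≥ 2 (`IsPreNicholsIdeal`);
such an ideal is automatically contained in the defining ideal `Jq` of the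
Nichols algebra, which is the largest such ideal.  A statement
"`x = 0` holds in the pre-Nichols algebra `T(V)/I`" is formalized as `x ∈ I`.
-/

open scoped TensorProduct

noncomputable section

namespace PreNicholsPaper

/-- The tensor algebra `T(V)` of the braided vector space of diagonal type of rank `θ`. -/
abbrev TV (θ : ℕ) := FreeAlgebra ℂ (Fin θ)

/-- The generator `x_i` of `T(V)`. -/
def gen (θ : ℕ) (i : Fin θ) : TV θ := FreeAlgebra.ι ℂ i

/-- The monomial `x_{i_1} ⋯ x_{i_n}` associated to a word. -/
def wordElem (θ : ℕ) (w : List (Fin θ)) : TV θ := (w.map (gen θ)).prod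

/-- The multidegree in `ℕ₀^θ` of a word. -/
def degW (θ : ℕ) (w : List (Fin θ)) : Fin θ → ℕ := fun i => w.count i

/-- `α_i`, the `i`-th canonical basis vector of `ℕ₀^θ`. -/
def δ (θ : ℕ) (i : Fin θ) : Fin θ → ℕ := fun k => if k = i then 1 else 0

/-- The bilinear form `ℕ₀^θ × ℕ₀^θ → ℂˣ` attached to the braiding matrix,
`q(α_i, α_j) = q_{ij}`, evaluated in `ℂ`. -/
def qf {θ : ℕ} (q : Fin θ → Fin θ → ℂˣ) (a b : Fin θ → ℕ) : ℂ :=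
  ∏ i : Fin θ, ∏ j : Fin θ, (q i j : ℂ) ^ (a i * b j)

/-- `q̃_{ij} = q_{ij} q_{ji}`. -/
def qtil {θ : ℕ} (q : Fin θ → Fin θ → ℂˣ) (i j : Fin θ) : ℂ := (q i j : ℂ) * (q j i : ℂ)

/-- The braided commutator `[u,v]_c = uv - q(a,b) vu` of elements `u, v`
which are homogeneous of multidegrees `a`, `b` respectively. -/
def brk {θ : ℕ} (q : Fin θ → Fin θ → ℂˣ) (a b : Fin θ → ℕ) (u v : TV θ) : TV θ :=
  u * v - qf q a b • (v * u)

/-- `(ad_c x_i) y = x_i y - q(α_i, b) y x_i` for `y` homogeneous of multidegree `b`. -/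
def ad1 {θ : ℕ} (q : Fin θ → Fin θ → ℂˣ) (i : Fin θ) (b : Fin θ → ℕ) (y : TV θ) : TV θ :=
  brk q (δ θ i) b (gen θ i) y

/-- The iterated braided adjoint `x_{i_1 i_2 ⋯ i_k} = (ad_c x_{i_1}) x_{i_2 ⋯ i_k}`. -/
def xw {θ : ℕ} (q : Fin θ → Fin θ → ℂˣ) : List (Fin θ) → TV θ
  | [] => 1
  | [i] => gen θ i
  | i :: w => ad1 q i (degW θ w) (xw q w)

/-- `(ad_c x_i)^m x_j`. -/
def adpow {θ : ℕ} (q : Fin θ → Fin θ → ℂˣ) (i j : Fin θ) : ℕ → TV θ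
  | 0 => gen θ j
  | m + 1 => ad1 q i (fun k => m * δ θ i k + δ θ j k) (adpow q i j m)

/-- The homogeneous component of total degree `n` of `T(V)`. -/
def homogTot (θ : ℕ) (n : ℕ) : Submodule ℂ (TV θ) :=
  Submodule.span ℂ {x | ∃ w : List (Fin θ), w.length = n ∧ x = wordElem θ w}

/-- The homogeneous component of multidegree `d ∈ ℕ₀^θ` of `T(V)`. -/
def homogD (θ : ℕ) (d : Fin θ → ℕ) : Submodule ℂ (TV θ) :=
  Submodule.span ℂ {x | ∃ w : List (Fin θ), degW θ w = d ∧ x = wordElem θ w}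

/-- The braided bialgebra structure on `T(V)` determined by the braiding matrix `q`:
the braided coproduct `Δ` together with the multiplication `mulB` of the braided
tensor product `T(V) ⊗ T(V)`.  These axioms determine `Δ` and `mulB` uniquely. -/
structure BraidedStr (θ : ℕ) (q : Fin θ → Fin θ → ℂˣ) where
  Δ : TV θ →ₗ[ℂ] TensorProduct ℂ (TV θ) (TV θ)
  mulB : TensorProduct ℂ (TV θ) (TV θ) →ₗ[ℂ]
    TensorProduct ℂ (TV θ) (TV θ) →ₗ[ℂ] TensorProduct ℂ (TV θ) (TV θ)
  mulB_spec : ∀ (a d : TV θ) (wb wc : List (Fin θ)),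
    mulB (a ⊗ₜ[ℂ] wordElem θ wb) (wordElem θ wc ⊗ₜ[ℂ] d)
      = qf q (degW θ wb) (degW θ wc) • ((a * wordElem θ wc) ⊗ₜ[ℂ] (wordElem θ wb * d))
  Δ_one : Δ 1 = 1 ⊗ₜ[ℂ] 1
  Δ_gen : ∀ i, Δ (gen θ i) = gen θ i ⊗ₜ[ℂ] 1 + 1 ⊗ₜ[ℂ] gen θ i
  Δ_mul : ∀ u v : TV θ, Δ (u * v) = mulB (Δ u) (Δ v)

variable {θ : ℕ} {q : Fin θ → Fin θ → ℂˣ}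

/-- `x` is a primitive element. -/
def IsPrimitiveIn (S : BraidedStr θ q) (x : TV θ) : Prop :=
  S.Δ x = x ⊗ₜ[ℂ] (1 : TV θ) + (1 : TV θ) ⊗ₜ[ℂ] x

/-- The submodule `I ⊗ T(V) + T(V) ⊗ J` of `T(V) ⊗ T(V)`. -/
def mixedPair (I J : Submodule ℂ (TV θ)) : Submodule ℂ (TensorProduct ℂ (TV θ) (TV θ)) :=
  Submodule.span ℂ
    ({x | ∃ a b : TV θ, a ∈ I ∧ x = a ⊗ₜ[ℂ] b} ∪ {x | ∃ a b : TV θ, b ∈ J ∧ x = a ⊗ₜ[ℂ] b})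

/-- The submodule `I ⊗ T(V) + T(V) ⊗ I` of `T(V) ⊗ T(V)`. -/
def mixedSub (I : Submodule ℂ (TV θ)) : Submodule ℂ (TensorProduct ℂ (TV θ) (TV θ)) :=
  mixedPair I I

/-- `I` is the defining ideal of a pre-Nichols algebra of `q`：an ℕ₀-homogeneous
two-sided (bi-)ideal of `T(V)` generated in degrees `≥ 2` which is also a coideal.
Such an ideal is automatically contained in the defining ideal `Jq` of the Nichols
algebra, and the pre-Nichols algebra is the quotient `T(V)/I`. -/
structure IsPreNicholsIdeal (S : BraidedStr θ q) (I : Submodule ℂ (TV θ)) : Prop where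
  mul_left : ∀ a x : TV θ, x ∈ I → a * x ∈ I
  mul_right : ∀ a x : TV θ, x ∈ I → x * a ∈ I
  homog_ge2 : I = Submodule.span ℂ {x | x ∈ I ∧ ∃ n, 2 ≤ n ∧ x ∈ homogTot θ n}
  coideal : ∀ x ∈ I, S.Δ x ∈ mixedSub I

/-- The defining ideal `J_q` of the Nichols algebra `B_q = T(V)/J_q`:
the maximal homogeneous braided Hopf ideal generated in degrees `≥ 2`. -/
def Jq (S : BraidedStr θ q) : Submodule ℂ (TV θ) := sSup {I | IsPreNicholsIdeal S I}

/-- The standard filtration of `T(V)`: span of words of length `≤ n`. -/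
def Wfil (θ : ℕ) (n : ℕ) : Submodule ℂ (TV θ) :=
  Submodule.span ℂ {x | ∃ w : List (Fin θ), w.length ≤ n ∧ x = wordElem θ w}

/-- The quotient algebra `T(V)/I` has finite Gelfand–Kirillov dimension, i.e.
the standard filtration of the (finitely generated) quotient has polynomial growth. -/
def FinGK (I : Submodule ℂ (TV θ)) : Prop :=
  ∃ C d : ℕ, ∀ n : ℕ, Module.finrank ℂ ((Wfil θ n).map I.mkQ) ≤ C * (n + 1) ^ d

/-- The Gelfand–Kirillov dimension of the quotient algebra `T(V)/I`. -/
def GKdim (I : Submodule ℂ (TV θ)) : ℝ :=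
  Filter.limsup
    (fun n : ℕ => Real.log (Module.finrank ℂ ((Wfil θ n).map I.mkQ)) / Real.log n)
    Filter.atTop

/-- `I` defines an eminent pre-Nichols algebra: it is a finite-GKdim pre-Nichols
algebra, and every finite-GKdim pre-Nichols algebra of `q` is a quotient of it. -/
def IsEminent (S : BraidedStr θ q) (I : Submodule ℂ (TV θ)) : Prop :=
  IsPreNicholsIdeal S I ∧ FinGK I ∧
    ∀ I' : Submodule ℂ (TV θ), IsPreNicholsIdeal S I' → FinGK I' → I ≤ I'

/-- The Dynkin diagram of the braiding matrix `q`: vertices `Fin θ`, an edge between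
`i ≠ j` iff `q̃_{ij} ≠ 1`. -/
def dynkin {θ : ℕ} (q : Fin θ → Fin θ → ℂˣ) : SimpleGraph (Fin θ) :=
  SimpleGraph.fromRel (fun i j => qtil q i j ≠ 1)

/-- The quantum number `(m)_t = 1 + t + ⋯ + t^{m-1}`. -/
def qnum (t : ℂ) (m : ℕ) : ℂ := ∑ k ∈ Finset.range m, t ^ k

/-- The set of `n ∈ ℕ₀` such that `(n+1)_{q_{ii}} (1 - q_{ii}^n q̃_{ij}) = 0`,
i.e. such that `(ad_c x_i)^{n+1} x_j = 0` in the Nichols algebra.  The entry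
`c_{ij}` of the generalized Cartan matrix is `-(min of this set)`. -/
def cSet {θ : ℕ} (q : Fin θ → Fin θ → ℂˣ) (i j : Fin θ) : Set ℕ :=
  {n | qnum (q i i : ℂ) (n + 1) * (1 - (q i i : ℂ) ^ n * qtil q i j) = 0}

/-- The generalized Cartan matrix of `q`. -/
def cij {θ : ℕ} (q : Fin θ → Fin θ → ℂˣ) (i j : Fin θ) : ℤ :=
  if i = j then 2 else -(Int.ofNat (sInf (cSet q i j)))

/-- All entries `c_{ij}` are defined at the vertex `i`. -/
def reflectable {θ : ℕ} (q : Fin θ → Fin θ → ℂˣ) (i : Fin θ) : Prop :=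
  ∀ j, j ≠ i → (cSet q i j).Nonempty

/-- The `i`-th reflection of the braiding matrix:
`(r_i q)_{jk} = q(s_i α_j, s_i α_k)` where `s_i α_j = α_j - c_{ij} α_i`. -/
def reflectMat {θ : ℕ} (q : Fin θ → Fin θ → ℂˣ) (i : Fin θ) : Fin θ → Fin θ → ℂˣ :=
  fun j k =>
    q j k * q j i ^ (-(cij q i k)) * q i k ^ (-(cij q i j)) * q i i ^ (cij q i j * cij q i k)

/-- The reflection `s_i` acting on `ℤ^θ`. -/
def sRefl {θ : ℕ} (q : Fin θ → Fin θ → ℂˣ) (i : Fin θ) (β : Fin θ → ℤ) : Fin θ → ℤ :=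
  fun k => β k - (if k = i then ∑ j, cij q i j * β j else 0)

/-- The (real) roots of `q`, together with the base points of the Weyl groupoid at
which they live: pairs `(q', β)` obtained from a simple root of `q` by iterated
reflections. -/
inductive ReachRoot {θ : ℕ} (q₀ : Fin θ → Fin θ → ℂˣ) :
    (Fin θ → Fin θ → ℂˣ) → (Fin θ → ℤ) → Prop
  | simple (j : Fin θ) : ReachRoot q₀ q₀ (fun k => if k = j then 1 else 0)
  | reflect {q' : Fin θ → Fin θ → ℂˣ} {β : Fin θ → ℤ} (i : Fin θ) :
      ReachRoot q₀ q' β → ReachRoot q₀ (reflectMat q' i) (sRefl q' i β)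

/-- `q` has a finite (generalized) root system: all reflections are defined at every
point of the Weyl groupoid, and the set of roots so obtained is finite. -/
def FiniteRootSystem {θ : ℕ} (q : Fin θ → Fin θ → ℂˣ) : Prop :=
  (∀ q' i, (∃ β, ReachRoot q q' β) → reflectable q' i) ∧
    Set.Finite {β : Fin θ → ℤ | ∃ q', ReachRoot q q' β}

/-- Conjecture (Andruskiewitsch–Angiono–Heckenberger): the root system of a Nichols
algebra of diagonal type with finite Gelfand–Kirillov dimension is finite. -/
def AAH : Prop :=
  ∀ (θ : ℕ) (q : Fin θ → Fin θ → ℂˣ) (S : BraidedStr θ q), FinGK (Jq S) → FiniteRootSystem q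

/-- The two-sided ideal of `T(V)` generated by a set. -/
def idealGen (θ : ℕ) (s : Set (TV θ)) : Submodule ℂ (TV θ) :=
  Submodule.span ℂ {x | ∃ g ∈ s, ∃ a b : TV θ, x = a * g * b}

end PreNicholsPaper

namespace PreNicholsPaper

/-- `x_u = [[x_{12}, x_{123}]_c, x_2]_c` (vertices `1,2,3` are `0,1,2 : Fin 3`). -/
def xu231 (q : Fin 3 → Fin 3 → ℂˣ) : TV 3 :=
  brk q ![2, 2, 1] ![0, 1, 0]
    (brk q ![1, 1, 0] ![1, 1, 1] (xw q [0, 1]) (xw q [0, 1, 2])) (gen 3 1)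

/-- `x_v = [[x_{123}, x_{23}]_c, x_2]_c`. -/
def xv132 (q : Fin 3 → Fin 3 → ℂˣ) : TV 3 :=
  brk q ![1, 2, 2] ![0, 1, 0]
    (brk q ![1, 1, 1] ![0, 1, 1] (xw q [0, 1, 2]) (xw q [1, 2])) (gen 3 1)

section Words

variable {θ : ℕ}

theorem gen_induction {P : TV θ → Prop} (one : P 1) (add : ∀ x y, P x → P y → P (x + y))
    (smul : ∀ (c : ℂ) x, P x → P (c • x)) (gen_mul : ∀ i x, P x → P (gen θ i * x))
    (x : TV θ) : P x := by
  suffices h : ∀ y, P y → P (x * y) by simpa using h 1 one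
  induction x using FreeAlgebra.induction with
  | grade0 r => intro y hy; rw [← Algebra.smul_def]; exact smul r y hy
  | grade1 i => exact gen_mul i
  | mul a b ha hb => intro y hy; rw [mul_assoc]; exact ha _ (hb _ hy)
  | add a b ha hb => intro y hy; rw [add_mul]; exact add _ _ (ha _ hy) (hb _ hy)

theorem linearMap_ext_gen {M : Type*} [AddCommMonoid M] [Module ℂ M] {f g : TV θ →ₗ[ℂ] M}
    (one : f 1 = g 1) (gen_mul : ∀ i x, f x = g x → f (gen θ i * x) = g (gen θ i * x)) :
    f = g := by
  ext x
  induction x using gen_induction with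
  | one => exact one
  | add x y hx hy => simp [hx, hy]
  | smul c x hx => simp [hx]
  | gen_mul i x hx => exact gen_mul i x hx

@[simp] theorem wordElem_nil : wordElem θ [] = 1 := rfl

theorem wordElem_cons (i : Fin θ) (w : List (Fin θ)) :
    wordElem θ (i :: w) = gen θ i * wordElem θ w := by
  simp [wordElem]

theorem wordElem_append (v w : List (Fin θ)) :
    wordElem θ (v ++ w) = wordElem θ v * wordElem θ w := by
  simp [wordElem]

theorem degW_nil : degW θ [] = 0 := by
  ext; simp [degW]

theorem degW_cons (i : Fin θ) (w : List (Fin θ)) : degW θ (i :: w) = δ θ i + degW θ w := by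
  ext k
  rcases eq_or_ne k i with rfl | h
  · simp [degW, δ, add_comm]
  · simp [degW, δ, h, h.symm]

theorem degW_append (v w : List (Fin θ)) : degW θ (v ++ w) = degW θ v + degW θ w := by
  ext k
  simp [degW]

theorem linearMap_ext_word {M : Type*} [AddCommMonoid M] [Module ℂ M] {f g : TV θ →ₗ[ℂ] M}
    (h : ∀ w, f (wordElem θ w) = g (wordElem θ w)) : f = g := by
  suffices hs : ∀ x, x ∈ Submodule.span ℂ (Set.range (wordElem θ)) from
    LinearMap.ext_on (Submodule.eq_top_iff'.2 hs) (by rintro _ ⟨w, rfl⟩; exact h w)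
  intro x
  induction x using gen_induction with
  | one => exact Submodule.subset_span ⟨[], rfl⟩
  | add x y hx hy => exact add_mem hx hy
  | smul c x hx => exact Submodule.smul_mem _ c hx
  | gen_mul i x hx =>
    refine Submodule.span_induction (p := fun x _ => gen θ i * x ∈ _) ?_ (by simp) ?_ ?_ hx
    · rintro _ ⟨w, rfl⟩
      exact Submodule.subset_span ⟨i :: w, wordElem_cons i w⟩
    · intro x y _ _ hx hy
      rw [mul_add]
      exact add_mem hx hy
    · intro c x _ hx
      rw [mul_smul_comm]
      exact Submodule.smul_mem _ c hx

theorem wordElem_mem_homogD (w : List (Fin θ)) : wordElem θ w ∈ homogD θ (degW θ w) :=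
  Submodule.subset_span ⟨w, rfl, rfl⟩

theorem gen_mem_homogD (i : Fin θ) : gen θ i ∈ homogD θ (δ θ i) := by
  have h := wordElem_mem_homogD [i]
  rwa [degW_cons, degW_nil, add_zero, wordElem_cons, wordElem_nil, mul_one] at h

theorem mul_mem_homogD {a b : Fin θ → ℕ} {u v : TV θ} (hu : u ∈ homogD θ a)
    (hv : v ∈ homogD θ b) : u * v ∈ homogD θ (a + b) := by
  have h := Submodule.mul_mem_mul hu hv
  rw [homogD, homogD, Submodule.span_mul_span] at h
  refine Submodule.span_mono ?_ h
  rintro _ ⟨_, ⟨v, rfl, rfl⟩, _, ⟨w, rfl, rfl⟩, rfl⟩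
  exact ⟨v ++ w, degW_append v w, (wordElem_append v w).symm⟩

theorem brk_mem_homogD (q : Fin θ → Fin θ → ℂˣ) {a b : Fin θ → ℕ} {u v : TV θ}
    (hu : u ∈ homogD θ a) (hv : v ∈ homogD θ b) : brk q a b u v ∈ homogD θ (a + b) :=
  sub_mem (mul_mem_homogD hu hv)
    (Submodule.smul_mem _ _ (add_comm b a ▸ mul_mem_homogD hv hu))

/-- The algebra endomorphism of `T(V)` multiplying `x_k` by `c_k`. -/
def tw (c : Fin θ → ℂ) : TV θ →ₐ[ℂ] TV θ := FreeAlgebra.lift ℂ fun k => c k • gen θ k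

@[simp] theorem tw_gen (c : Fin θ → ℂ) (k : Fin θ) : tw c (gen θ k) = c k • gen θ k := by
  simp [tw, gen]

theorem tw_tw (c d : Fin θ → ℂ) (x : TV θ) : tw c (tw d x) = tw (c * d) x := by
  have h : (tw c).comp (tw d) = tw (c * d) := by
    ext k
    change tw c (tw d (gen θ k)) = tw (c * d) (gen θ k)
    simp [smul_smul, mul_comm]
  exact DFunLike.congr_fun h x

theorem tw_one (x : TV θ) : tw (1 : Fin θ → ℂ) x = x := by
  have h : tw (1 : Fin θ → ℂ) = AlgHom.id ℂ (TV θ) := by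
    ext k
    change tw 1 (gen θ k) = gen θ k
    simp
  exact DFunLike.congr_fun h x

theorem tw_wordElem (c : Fin θ → ℂ) (w : List (Fin θ)) :
    tw c (wordElem θ w) = (∏ k, c k ^ degW θ w k) • wordElem θ w := by
  induction w with
  | nil => simp [degW_nil]
  | cons i w ih =>
    rw [wordElem_cons, map_mul, ih, tw_gen, smul_mul_smul_comm, degW_cons]
    congr 1
    simp only [Pi.add_apply, pow_add, Finset.prod_mul_distrib]
    simp [δ, pow_ite]

theorem tw_of_mem_homogD (c : Fin θ → ℂ) {d : Fin θ → ℕ} {u : TV θ} (hu : u ∈ homogD θ d) :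
    tw c u = (∏ k, c k ^ d k) • u := by
  refine Submodule.span_induction (p := fun u _ => tw c u = (∏ k, c k ^ d k) • u) ?_ (by simp)
    ?_ ?_ hu
  · rintro _ ⟨w, rfl, rfl⟩
    exact tw_wordElem c w
  · intro x y _ _ hx hy
    rw [map_add, hx, hy, smul_add]
  · intro r x _ hx
    rw [map_smul, hx, smul_comm]

/-- The character `β' ↦ q(β, β')` of `ℤ^θ`, given by its values on the simple roots. -/
def chi (q : Fin θ → Fin θ → ℂˣ) (β : Fin θ → ℕ) : Fin θ → ℂ :=
  fun k => ∏ i, (q i k : ℂ) ^ β i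

theorem qf_eq_prod_chi (q : Fin θ → Fin θ → ℂˣ) (a b : Fin θ → ℕ) :
    qf q a b = ∏ k, chi q a k ^ b k := by
  rw [qf, Finset.prod_comm]
  refine Finset.prod_congr rfl fun k _ => ?_
  rw [chi, ← Finset.prod_pow]
  exact Finset.prod_congr rfl fun i _ => pow_mul _ _ _

theorem chi_δ (q : Fin θ → Fin θ → ℂˣ) (i : Fin θ) : chi q (δ θ i) = fun k => (q i k : ℂ) := by
  ext k
  simp [chi, δ, pow_ite]

theorem chi_add (q : Fin θ → Fin θ → ℂˣ) (a b : Fin θ → ℕ) :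
    chi q (a + b) = chi q a * chi q b := by
  ext k
  simp [chi, pow_add, Finset.prod_mul_distrib]

theorem tw_chi (q : Fin θ → Fin θ → ℂˣ) (a : Fin θ → ℕ) {b : Fin θ → ℕ} {u : TV θ}
    (hu : u ∈ homogD θ b) : tw (chi q a) u = qf q a b • u := by
  rw [tw_of_mem_homogD _ hu, qf_eq_prod_chi]

/-- The counit of `T(V)`. -/
def counit (θ : ℕ) : TV θ →ₐ[ℂ] ℂ := FreeAlgebra.lift ℂ 0

@[simp] theorem counit_gen (i : Fin θ) : counit θ (gen θ i) = 0 := by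
  simp [counit, gen]

theorem counit_tw (c : Fin θ → ℂ) (x : TV θ) : counit θ (tw c x) = counit θ x := by
  have h : (counit θ).comp (tw c) = counit θ := by
    ext k
    change counit θ (tw c (gen θ k)) = counit θ (gen θ k)
    simp
  exact DFunLike.congr_fun h x

theorem qf_zero_left (q : Fin θ → Fin θ → ℂˣ) (b : Fin θ → ℕ) : qf q 0 b = 1 := by
  simp [qf]

end Words

section Coproduct

variable {θ : ℕ}

/-- Contraction of the left tensor factor with a linear functional. -/
def contrL {M M' : Type*} [AddCommGroup M] [Module ℂ M] [AddCommGroup M'] [Module ℂ M']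
    (f : M →ₗ[ℂ] ℂ) : M ⊗[ℂ] M' →ₗ[ℂ] M' :=
  (TensorProduct.lid ℂ M').toLinearMap ∘ₗ LinearMap.rTensor M' f

@[simp] theorem contrL_tmul {M M' : Type*} [AddCommGroup M] [Module ℂ M] [AddCommGroup M']
    [Module ℂ M'] (f : M →ₗ[ℂ] ℂ) (a : M) (b : M') : contrL f (a ⊗ₜ[ℂ] b) = f a • b := by
  simp [contrL]

/-- Contraction of the right tensor factor with a linear functional. -/
def contrR {M M' : Type*} [AddCommGroup M] [Module ℂ M] [AddCommGroup M'] [Module ℂ M']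
    (f : M' →ₗ[ℂ] ℂ) : M ⊗[ℂ] M' →ₗ[ℂ] M :=
  (TensorProduct.rid ℂ M).toLinearMap ∘ₗ LinearMap.lTensor M f

@[simp] theorem contrR_tmul {M M' : Type*} [AddCommGroup M] [Module ℂ M] [AddCommGroup M']
    [Module ℂ M'] (f : M' →ₗ[ℂ] ℂ) (a : M) (b : M') : contrR f (a ⊗ₜ[ℂ] b) = f b • a := by
  simp [contrR]

/-- Left multiplication by `u ⊗ 1` on `T(V) ⊗ T(V)`. -/
def opX (u : TV θ) : Module.End ℂ (TV θ ⊗[ℂ] TV θ) :=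
  TensorProduct.map (LinearMap.mulLeft ℂ u) LinearMap.id

@[simp] theorem opX_tmul (u a b : TV θ) : opX u (a ⊗ₜ[ℂ] b) = (u * a) ⊗ₜ[ℂ] b := by
  simp [opX]

/-- Left multiplication by `1 ⊗ x_i` on the braided tensor square of `T(V)`. -/
def opY (q : Fin θ → Fin θ → ℂˣ) (i : Fin θ) : Module.End ℂ (TV θ ⊗[ℂ] TV θ) :=
  TensorProduct.map (tw fun k => (q i k : ℂ)).toLinearMap (LinearMap.mulLeft ℂ (gen θ i))

@[simp] theorem opY_tmul (q : Fin θ → Fin θ → ℂˣ) (i : Fin θ) (a b : TV θ) :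
    opY q i (a ⊗ₜ[ℂ] b) = tw (fun k => (q i k : ℂ)) a ⊗ₜ[ℂ] (gen θ i * b) := by
  simp [opY]

/-- The action of `T(V)` on the braided tensor square through the braided coproduct. -/
def coact (q : Fin θ → Fin θ → ℂˣ) : TV θ →ₐ[ℂ] Module.End ℂ (TV θ ⊗[ℂ] TV θ) :=
  FreeAlgebra.lift ℂ fun i => opX (gen θ i) + opY q i

theorem coact_gen (q : Fin θ → Fin θ → ℂˣ) (i : Fin θ) :
    coact q (gen θ i) = opX (gen θ i) + opY q i := by
  simp [coact, gen]

/-- The braided coproduct of `T(V)`. -/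
def cop (q : Fin θ → Fin θ → ℂˣ) : TV θ →ₗ[ℂ] TV θ ⊗[ℂ] TV θ :=
  LinearMap.applyₗ ((1 : TV θ) ⊗ₜ[ℂ] (1 : TV θ)) ∘ₗ (coact q).toLinearMap

theorem cop_apply (q : Fin θ → Fin θ → ℂˣ) (x : TV θ) : cop q x = coact q x (1 ⊗ₜ[ℂ] 1) := rfl

@[simp] theorem cop_one (q : Fin θ → Fin θ → ℂˣ) : cop q 1 = 1 ⊗ₜ[ℂ] 1 := by
  simp [cop_apply]

theorem cop_mul (q : Fin θ → Fin θ → ℂˣ) (x y : TV θ) : cop q (x * y) = coact q x (cop q y) := by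
  simp [cop_apply]

theorem cop_gen_mul (q : Fin θ → Fin θ → ℂˣ) (i : Fin θ) (x : TV θ) :
    cop q (gen θ i * x) = opX (gen θ i) (cop q x) + opY q i (cop q x) := by
  rw [cop_mul, coact_gen, LinearMap.add_apply]

namespace BraidedStr

variable {q : Fin θ → Fin θ → ℂˣ}

theorem mulB_gen_one (S : BraidedStr θ q) (i : Fin θ) :
    S.mulB (gen θ i ⊗ₜ[ℂ] 1) = opX (gen θ i) := by
  refine TensorProduct.ext (linearMap_ext_word fun w => LinearMap.ext fun d => ?_)
  have h := S.mulB_spec (gen θ i) d [] w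
  rw [degW_nil, qf_zero_left, one_smul, wordElem_nil, one_mul] at h
  simpa using h

theorem mulB_one_gen (S : BraidedStr θ q) (i : Fin θ) :
    S.mulB (1 ⊗ₜ[ℂ] gen θ i) = opY q i := by
  refine TensorProduct.ext (linearMap_ext_word fun w => LinearMap.ext fun d => ?_)
  have h := S.mulB_spec 1 d [i] w
  rw [degW_cons, degW_nil, add_zero, wordElem_cons, wordElem_nil, mul_one, one_mul] at h
  change S.mulB (1 ⊗ₜ[ℂ] gen θ i) (wordElem θ w ⊗ₜ[ℂ] d) = opY q i (wordElem θ w ⊗ₜ[ℂ] d)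
  rw [h, opY_tmul, ← chi_δ, tw_chi q _ (wordElem_mem_homogD w), TensorProduct.smul_tmul']

theorem Δ_eq_cop (S : BraidedStr θ q) : S.Δ = cop q := by
  refine linearMap_ext_gen (by rw [S.Δ_one, cop_one]) fun i x hx => ?_
  rw [S.Δ_mul, S.Δ_gen, map_add, LinearMap.add_apply, mulB_gen_one, mulB_one_gen, cop_gen_mul, hx]

end BraidedStr

section Existence

variable (q : Fin θ → Fin θ → ℂˣ)

/-- The action of the right tensor factor on the braided tensor square by left multiplication. -/
def actR : TV θ →ₐ[ℂ] Module.End ℂ (TV θ ⊗[ℂ] TV θ) := FreeAlgebra.lift ℂ (opY q)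

theorem actR_gen (i : Fin θ) : actR q (gen θ i) = opY q i := by
  simp [actR, gen]

/-- The multiplication of the braided tensor square. -/
def braidedMul : TV θ ⊗[ℂ] TV θ →ₗ[ℂ] TV θ ⊗[ℂ] TV θ →ₗ[ℂ] TV θ ⊗[ℂ] TV θ :=
  TensorProduct.lift
    (LinearMap.mk₂ ℂ (fun a b => opX a * actR q b)
      (fun a a' b => by
        rw [← add_mul]; congr 1; exact TensorProduct.ext' fun _ _ => by
          simp [add_mul, TensorProduct.add_tmul])
      (fun c a b => by
        rw [← smul_mul_assoc]; congr 1; exact TensorProduct.ext' fun _ _ => by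
          simp [TensorProduct.smul_tmul'])
      (fun a b b' => by rw [map_add, mul_add])
      (fun c a b => by rw [map_smul, mul_smul_comm]))

theorem braidedMul_tmul (a b : TV θ) : braidedMul q (a ⊗ₜ[ℂ] b) = opX a * actR q b := by
  simp [braidedMul]

theorem actR_word_tmul (wb wc : List (Fin θ)) (d : TV θ) :
    actR q (wordElem θ wb) (wordElem θ wc ⊗ₜ[ℂ] d) =
      qf q (degW θ wb) (degW θ wc) • (wordElem θ wc ⊗ₜ[ℂ] (wordElem θ wb * d)) := by
  induction wb with
  | nil => simp [degW_nil, qf_zero_left]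
  | cons i w ih =>
    rw [wordElem_cons, map_mul, Module.End.mul_apply, ih, map_smul, actR_gen, opY_tmul, ← chi_δ,
      tw_chi q _ (wordElem_mem_homogD wc), ← TensorProduct.smul_tmul', smul_smul, degW_cons,
      mul_assoc]
    congr 1
    simp only [qf_eq_prod_chi, chi_add, Pi.mul_apply, mul_pow, Finset.prod_mul_distrib]
    exact mul_comm _ _

theorem braidedMul_opX (i : Fin θ) (s t : TV θ ⊗[ℂ] TV θ) :
    braidedMul q (opX (gen θ i) s) t = opX (gen θ i) (braidedMul q s t) := by
  induction s using TensorProduct.induction_on with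
  | zero => simp
  | add s s' hs hs' => simp [hs, hs']
  | tmul a b =>
    rw [opX_tmul, braidedMul_tmul, braidedMul_tmul, Module.End.mul_apply, Module.End.mul_apply]
    generalize actR q b t = r
    induction r using TensorProduct.induction_on with
    | zero => simp
    | add s s' hs hs' => simp only [map_add, hs, hs']
    | tmul c d => simp [mul_assoc]

theorem braidedMul_opY (i : Fin θ) (s t : TV θ ⊗[ℂ] TV θ) :
    braidedMul q (opY q i s) t = opY q i (braidedMul q s t) := by
  induction s using TensorProduct.induction_on with
  | zero => simp
  | add s s' hs hs' => simp [hs, hs']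
  | tmul a b =>
    rw [opY_tmul, braidedMul_tmul, braidedMul_tmul, Module.End.mul_apply, Module.End.mul_apply,
      map_mul, Module.End.mul_apply, actR_gen]
    generalize actR q b t = r
    induction r using TensorProduct.induction_on with
    | zero => simp
    | add s s' hs hs' => simp only [map_add, hs, hs']
    | tmul c d => simp

/-- The braided bialgebra structure of `T(V)`. -/
def braidedStr : BraidedStr θ q where
  Δ := cop q
  mulB := braidedMul q
  mulB_spec a d wb wc := by
    rw [braidedMul_tmul, Module.End.mul_apply, actR_word_tmul, map_smul, opX_tmul]
  Δ_one := cop_one q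
  Δ_gen i := by
    have h := cop_gen_mul q i 1
    simpa using h
  Δ_mul u v := by
    induction u using gen_induction with
    | one =>
      rw [one_mul, cop_one, braidedMul_tmul, map_one, mul_one]
      generalize cop q v = r
      induction r using TensorProduct.induction_on with
      | zero => simp
      | add s s' hs hs' => simp only [map_add, ← hs, ← hs']
      | tmul c d => simp
    | add x y hx hy => simp [add_mul, hx, hy]
    | smul c x hx => simp [hx]
    | gen_mul i x hx =>
      rw [mul_assoc, cop_gen_mul, hx, cop_gen_mul, map_add, LinearMap.add_apply, braidedMul_opX,
        braidedMul_opY]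

end Existence

theorem contrL_counit_cop (q : Fin θ → Fin θ → ℂˣ) (x : TV θ) :
    contrL (counit θ).toLinearMap (cop q x) = x := by
  suffices h : contrL (counit θ).toLinearMap ∘ₗ cop q = LinearMap.id from DFunLike.congr_fun h x
  refine linearMap_ext_gen (by simp) fun i x hx => ?_
  simp only [LinearMap.comp_apply, LinearMap.id_apply] at hx ⊢
  conv_rhs => rw [← hx]
  rw [cop_gen_mul, map_add]
  generalize cop q x = r
  induction r using TensorProduct.induction_on with
  | zero => simp
  | add s s' hs hs' => simp only [map_add, mul_add, ← hs, ← hs']; abel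
  | tmul c d => simp [counit_tw]

theorem contrR_counit_cop (q : Fin θ → Fin θ → ℂˣ) (x : TV θ) :
    contrR (counit θ).toLinearMap (cop q x) = x := by
  suffices h : contrR (counit θ).toLinearMap ∘ₗ cop q = LinearMap.id from DFunLike.congr_fun h x
  refine linearMap_ext_gen (by simp) fun i x hx => ?_
  simp only [LinearMap.comp_apply, LinearMap.id_apply] at hx ⊢
  conv_rhs => rw [← hx]
  rw [cop_gen_mul, map_add]
  generalize cop q x = r
  induction r using TensorProduct.induction_on with
  | zero => simp
  | add s s' hs hs' => simp only [map_add, mul_add, ← hs, ← hs']; abel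
  | tmul c d => simp

end Coproduct

section Derivations

variable {θ : ℕ}

/-- The linear functional on `T(V)` taking the coefficient of `x_i`. -/
def coord (i : Fin θ) : TV θ →ₗ[ℂ] ℂ :=
  TrivSqZeroExt.sndHom ℂ ℂ ∘ₗ (FreeAlgebra.lift ℂ fun j : Fin θ =>
    (TrivSqZeroExt.inr (if j = i then 1 else 0) : TrivSqZeroExt ℂ ℂ)).toLinearMap

@[simp] theorem coord_one (i : Fin θ) : coord i 1 = 0 := by
  simp [coord]

theorem coord_gen_mul (i j : Fin θ) (x : TV θ) :
    coord i (gen θ j * x) = if j = i then counit θ x else 0 := by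
  have h : (TrivSqZeroExt.fstHom ℂ ℂ ℂ).comp (FreeAlgebra.lift ℂ fun j : Fin θ =>
      (TrivSqZeroExt.inr (if j = i then 1 else 0) : TrivSqZeroExt ℂ ℂ)) = counit θ := by
    ext k
    simp only [counit, AlgHom.coe_comp, Function.comp_apply, FreeAlgebra.lift_ι_apply,
      TrivSqZeroExt.fstHom_apply, TrivSqZeroExt.fst_inr, Pi.zero_apply]
  rw [← h]
  simp only [coord, gen, LinearMap.comp_apply, AlgHom.toLinearMap_apply, map_mul,
    FreeAlgebra.lift_ι_apply, TrivSqZeroExt.sndHom_apply, TrivSqZeroExt.snd_mul]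
  simp only [TrivSqZeroExt.fst_inr, TrivSqZeroExt.snd_inr, AlgHom.coe_comp, Function.comp_apply,
    TrivSqZeroExt.fstHom_apply]
  simp

@[simp] theorem coord_gen (i j : Fin θ) : coord i (gen θ j) = if j = i then 1 else 0 := by
  simpa using coord_gen_mul i j 1

theorem coord_tw (c : Fin θ → ℂ) (i : Fin θ) (x : TV θ) :
    coord i (tw c x) = c i * coord i x := by
  suffices h : coord i ∘ₗ (tw c).toLinearMap = c i • coord i from DFunLike.congr_fun h x
  refine linearMap_ext_gen (by simp) fun j x hx => ?_
  simp only [LinearMap.comp_apply, AlgHom.toLinearMap_apply, LinearMap.smul_apply, map_mul, tw_gen,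
    smul_mul_assoc, map_smul, coord_gen_mul, counit_tw, smul_eq_mul]
  split_ifs with h <;> simp [h]

theorem coord_word {i : Fin θ} {w : List (Fin θ)} (h : w.length ≠ 1) :
    coord i (wordElem θ w) = 0 := by
  match w with
  | [] => simp
  | [j] => simp at h
  | j :: k :: w => simp [wordElem_cons, coord_gen_mul]

theorem counit_word {w : List (Fin θ)} (h : w ≠ []) : counit θ (wordElem θ w) = 0 := by
  match w with
  | [] => simp at h
  | j :: w => simp [wordElem_cons]

variable (q : Fin θ → Fin θ → ℂˣ)

/-- The left skew derivations of `T(V)`. -/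
def der (i : Fin θ) : TV θ →ₗ[ℂ] TV θ := contrL (coord i) ∘ₗ cop q

@[simp] theorem der_one (i : Fin θ) : der q i 1 = 0 := by
  simp [der]

theorem der_gen_mul (i j : Fin θ) (x : TV θ) :
    der q i (gen θ j * x) = (if j = i then x else 0) + (q j i : ℂ) • (gen θ j * der q i x) := by
  have h1 : (if j = i then x else 0) = contrL (coord i) (opX (gen θ j) (cop q x)) := by
    transitivity if j = i then contrL (counit θ).toLinearMap (cop q x) else 0
    · rw [contrL_counit_cop]
    generalize cop q x = r
    induction r using TensorProduct.induction_on with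
    | zero => simp
    | add s s' hs hs' => rw [map_add, map_add, map_add, ← hs, ← hs']; split_ifs <;> simp
    | tmul c d => simp [coord_gen_mul]
  rw [h1, der, LinearMap.comp_apply, LinearMap.comp_apply, cop_gen_mul, map_add]
  congr 1
  generalize cop q x = r
  induction r using TensorProduct.induction_on with
  | zero => simp
  | add s s' hs hs' => simp only [map_add, mul_add, smul_add, hs, hs']
  | tmul c d => simp [coord_tw, smul_smul]

theorem der_tw (c : Fin θ → ℂ) (i : Fin θ) (x : TV θ) :
    der q i (tw c x) = c i • tw c (der q i x) := by
  suffices h : der q i ∘ₗ (tw c).toLinearMap = c i • (tw c).toLinearMap ∘ₗ der q i from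
    DFunLike.congr_fun h x
  refine linearMap_ext_gen (by simp) fun j x hx => ?_
  simp only [LinearMap.comp_apply, AlgHom.toLinearMap_apply, LinearMap.smul_apply] at hx ⊢
  simp only [map_mul, tw_gen, smul_mul_assoc, map_smul, der_gen_mul, map_add, hx, smul_add,
    mul_smul_comm]
  congr 1
  · split_ifs with h <;> simp [h]
  · simp only [smul_smul]
    congr 1
    ring

theorem der_mul (i : Fin θ) (x y : TV θ) :
    der q i (x * y) = der q i x * y + tw (fun k => (q k i : ℂ)) x * der q i y := by
  induction x using gen_induction with
  | one => simp
  | add x x' hx hx' => simp only [add_mul, map_add, hx, hx']; abel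
  | smul c x hx => simp only [smul_mul_assoc, map_smul, hx, smul_add]
  | gen_mul j x hx =>
    rw [mul_assoc, der_gen_mul, hx, der_gen_mul, map_mul, tw_gen]
    simp only [add_mul, mul_add, smul_add, smul_mul_assoc, mul_assoc, ite_mul, zero_mul, add_assoc]

theorem cop_der (i : Fin θ) (x : TV θ) :
    cop q (der q i x) = TensorProduct.map (der q i) LinearMap.id (cop q x) := by
  induction x using gen_induction with
  | one => simp
  | add x x' hx hx' => simp only [map_add, hx, hx']
  | smul c x hx => simp only [map_smul, hx]
  | gen_mul j x hx =>
    rw [der_gen_mul, map_add, map_smul, cop_gen_mul, hx, cop_gen_mul, apply_ite (cop q), map_zero]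
    generalize cop q x = r
    induction r using TensorProduct.induction_on with
    | zero => simp
    | add s s' hs hs' =>
      have h : (if j = i then s + s' else 0) = (if j = i then s else 0) + if j = i then s' else 0 := by
        split_ifs <;> simp
      simp only [map_add, smul_add] at hs hs' ⊢
      rw [h]
      linear_combination (norm := module) hs + hs'
    | tmul c d =>
      simp only [TensorProduct.map_tmul, LinearMap.id_apply, opX_tmul, opY_tmul, map_add,
        der_gen_mul, der_tw, TensorProduct.add_tmul, ← TensorProduct.smul_tmul', smul_add]
      split_ifs <;> simp [add_assoc]

/-- The functional `x ↦ (f_{i_1} ⊗ ⋯ ⊗ f_{i_n}) (Δ^{(n)} x)` attached to a word. -/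
def iterF {ι : Type*} (f : ι → TV θ →ₗ[ℂ] ℂ) : List ι → TV θ →ₗ[ℂ] ℂ
  | [] => (counit θ).toLinearMap
  | i :: w => iterF f w ∘ₗ contrL (f i) ∘ₗ cop q

/-- The functionals on `T(V)` given by iterated skew derivations. -/
abbrev evalW : List (Fin θ) → TV θ →ₗ[ℂ] ℂ := iterF q coord

theorem evalW_cons (i : Fin θ) (w : List (Fin θ)) (x : TV θ) :
    evalW q (i :: w) x = evalW q w (der q i x) := rfl

/-- The span of the tensors of words of total length `n`. -/
def wordTensors (θ n : ℕ) : Submodule ℂ (TV θ ⊗[ℂ] TV θ) :=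
  Submodule.span ℂ {t | ∃ a b : List (Fin θ), a.length + b.length = n ∧
    t = wordElem θ a ⊗ₜ[ℂ] wordElem θ b}

theorem cop_word_mem (w : List (Fin θ)) : cop q (wordElem θ w) ∈ wordTensors θ w.length := by
  induction w with
  | nil => exact Submodule.subset_span ⟨[], [], rfl, by simp⟩
  | cons i w ih =>
    rw [wordElem_cons, cop_gen_mul, ← LinearMap.add_apply]
    refine Submodule.span_induction
      (p := fun t _ => (opX (gen θ i) + opY q i) t ∈ wordTensors θ (i :: w).length) ?_ (by simp)
      (fun x y _ _ hx hy => by rw [map_add]; exact add_mem hx hy)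
      (fun c x _ hx => by rw [map_smul]; exact Submodule.smul_mem _ _ hx) ih
    rintro _ ⟨a, b, hab, rfl⟩
    rw [LinearMap.add_apply, opX_tmul, opY_tmul, tw_wordElem, ← TensorProduct.smul_tmul',
      ← wordElem_cons, ← wordElem_cons]
    exact add_mem (Submodule.subset_span ⟨i :: a, b, by simp; omega, rfl⟩)
      (Submodule.smul_mem _ _ (Submodule.subset_span ⟨a, i :: b, by simp; omega, rfl⟩))

theorem linearMap_eq_of_wordTensors {M : Type*} [AddCommGroup M] [Module ℂ M] {n : ℕ}
    {f g : TV θ ⊗[ℂ] TV θ →ₗ[ℂ] M}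
    (h : ∀ a b : List (Fin θ), a.length + b.length = n →
      f (wordElem θ a ⊗ₜ[ℂ] wordElem θ b) = g (wordElem θ a ⊗ₜ[ℂ] wordElem θ b))
    {t : TV θ ⊗[ℂ] TV θ} (ht : t ∈ wordTensors θ n) : f t = g t := by
  refine LinearMap.eqOn_span (s := {t | ∃ a b : List (Fin θ), a.length + b.length = n ∧
    t = wordElem θ a ⊗ₜ[ℂ] wordElem θ b}) ?_ ht
  rintro _ ⟨a, b, hab, rfl⟩
  exact h a b hab

theorem evalW_word_eq_zero {v w : List (Fin θ)} (h : v.length ≠ w.length) :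
    evalW q v (wordElem θ w) = 0 := by
  induction v generalizing w with
  | nil => exact counit_word fun hw => h (by simp [hw])
  | cons i v ih =>
    refine linearMap_eq_of_wordTensors (f := evalW q v ∘ₗ contrL (coord i)) (g := 0) ?_
      (cop_word_mem q w)
    intro a b hab
    by_cases ha : a.length = 1
    · have : v.length ≠ b.length := by simp at h; omega
      simp [ih this]
    · simp [coord_word ha]

theorem evalW_tw (c : Fin θ → ℂ) (w : List (Fin θ)) (x : TV θ) :
    evalW q w (tw c x) = (w.map c).prod * evalW q w x := by
  induction w generalizing x with
  | nil => simp [iterF, counit_tw]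
  | cons i w ih => rw [evalW_cons, der_tw, map_smul, ih, evalW_cons]; simp [mul_assoc]

/-- The common kernel of all iterated skew derivations. -/
def radical : Submodule ℂ (TV θ) := ⨅ w, LinearMap.ker (evalW q w)

variable {q}

theorem mem_radical {x : TV θ} : x ∈ radical q ↔ ∀ w, evalW q w x = 0 := by
  simp [radical]

theorem der_mem_radical {x : TV θ} (hx : x ∈ radical q) (i : Fin θ) : der q i x ∈ radical q :=
  mem_radical.2 fun w => mem_radical.1 hx (i :: w)

theorem tw_mem_radical {x : TV θ} (hx : x ∈ radical q) (c : Fin θ → ℂ) : tw c x ∈ radical q :=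
  mem_radical.2 fun w => by rw [evalW_tw, mem_radical.1 hx, mul_zero]

theorem mul_left_mem_radical (a x : TV θ) (hx : x ∈ radical q) : a * x ∈ radical q := by
  induction a using gen_induction with
  | one => simpa using hx
  | add a b ha hb => rw [add_mul]; exact add_mem ha hb
  | smul c a ha => rw [smul_mul_assoc]; exact Submodule.smul_mem _ _ ha
  | gen_mul j a ha =>
    rw [mul_assoc]
    generalize a * x = y at ha
    refine mem_radical.2 fun w => ?_
    induction w generalizing y with
    | nil => simp [iterF]
    | cons i w ih =>
      rw [evalW_cons, der_gen_mul, map_add, map_smul, ih _ (der_mem_radical ha i)]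
      split_ifs
      · simp [mem_radical.1 ha]
      · simp

theorem mul_right_mem_radical (a x : TV θ) (hx : x ∈ radical q) : x * a ∈ radical q := by
  refine mem_radical.2 fun w => ?_
  induction w generalizing x a with
  | nil => simp only [iterF, AlgHom.toLinearMap_apply, map_mul]
           rw [show counit θ x = 0 from mem_radical.1 hx []]
           simp
  | cons i w ih =>
    rw [evalW_cons, der_mul, map_add, ih _ _ (der_mem_radical hx i), ih _ _ (tw_mem_radical hx _),
      add_zero]

end Derivations

section Radical

variable {θ : ℕ} {q : Fin θ → Fin θ → ℂˣ}

theorem apply_contrL_eq {M M' : Type*} [AddCommGroup M] [Module ℂ M] [AddCommGroup M']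
    [Module ℂ M'] (f : M →ₗ[ℂ] ℂ) (g : M' →ₗ[ℂ] ℂ) (t : M ⊗[ℂ] M') :
    g (contrL f t) = f (contrR g t) := by
  induction t using TensorProduct.induction_on with
  | zero => simp
  | add s t hs ht => simp only [map_add, hs, ht]
  | tmul a b => simp [mul_comm]

theorem apply_contrL_map {M M' P P' : Type*} [AddCommGroup M] [Module ℂ M] [AddCommGroup M']
    [Module ℂ M'] [AddCommGroup P] [Module ℂ P] [AddCommGroup P'] [Module ℂ P'] (f : P →ₗ[ℂ] ℂ)
    (g : P' →ₗ[ℂ] ℂ) (a : M →ₗ[ℂ] P) (b : M' →ₗ[ℂ] P') (t : M ⊗[ℂ] M') :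
    g (contrL f (TensorProduct.map a b t)) = (g ∘ₗ b) (contrL (f ∘ₗ a) t) := by
  induction t using TensorProduct.induction_on with
  | zero => simp
  | add s t hs ht => simp only [map_add, hs, ht]
  | tmul a b => simp

theorem tensor_eq_zero_of_contr {M ι : Type*} [AddCommGroup M] [Module ℂ M]
    {g : ι → M →ₗ[ℂ] ℂ} (hg : ∀ x, (∀ a, g a x = 0) → x = 0) {s : M ⊗[ℂ] M}
    (hs : ∀ a b, g b (contrL (g a) s) = 0) : s = 0 := by
  classical
  let 𝒞 := Module.Basis.ofVectorSpace ℂ M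
  refine (TensorProduct.equivFinsuppOfBasisRight (M := M) 𝒞).injective ?_
  rw [map_zero]
  ext k
  rw [TensorProduct.equivFinsuppOfBasisRight_apply]
  refine hg _ fun a => ?_
  change g a (contrR (𝒞.coord k) s) = 0
  rw [← apply_contrL_eq, hg _ (hs a), map_zero]

theorem mixedSub_eq_ker (I : Submodule ℂ (TV θ)) :
    mixedSub I = LinearMap.ker (TensorProduct.map I.mkQ I.mkQ) := by
  apply le_antisymm
  · refine Submodule.span_le.2 ?_
    rintro _ (⟨a, b, ha, rfl⟩ | ⟨a, b, hb, rfl⟩)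
    · simp [(Submodule.Quotient.mk_eq_zero I).2 ha]
    · simp [(Submodule.Quotient.mk_eq_zero I).2 hb]
  · have hex : Function.Exact I.subtype I.mkQ := LinearMap.exact_subtype_mkQ I
    rw [TensorProduct.map_ker hex I.mkQ_surjective hex I.mkQ_surjective]
    refine sup_le ?_ ?_
    · rintro _ ⟨t, rfl⟩
      induction t using TensorProduct.induction_on with
      | zero => simp
      | add s t hs ht => rw [map_add]; exact add_mem hs ht
      | tmul a b => exact Submodule.subset_span (Or.inr ⟨a, b, b.2, rfl⟩)
    · rintro _ ⟨t, rfl⟩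
      induction t using TensorProduct.induction_on with
      | zero => simp
      | add s t hs ht => rw [map_add]; exact add_mem hs ht
      | tmul a b => exact Submodule.subset_span (Or.inl ⟨a, b, a.2, rfl⟩)

theorem evalW_append (v w : List (Fin θ)) (x : TV θ) :
    evalW q w (contrL (evalW q v) (cop q x)) = evalW q (v ++ w) x := by
  induction v generalizing x with
  | nil => exact congrArg _ (contrL_counit_cop q x)
  | cons i v ih =>
    rw [List.cons_append, evalW_cons, ← ih, cop_der, apply_contrL_map]
    rfl

theorem cop_mem_of_mem_radical {x : TV θ} (hx : x ∈ radical q) :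
    cop q x ∈ mixedSub (radical q) := by
  rw [mixedSub_eq_ker, LinearMap.mem_ker]
  have hle : ∀ w, radical q ≤ LinearMap.ker (evalW q w) := fun w => iInf_le _ w
  refine tensor_eq_zero_of_contr (g := fun w => (radical q).liftQ (evalW q w) (hle w)) ?_ ?_
  · intro y hy
    obtain ⟨y, rfl⟩ := (radical q).mkQ_surjective y
    exact (Submodule.Quotient.mk_eq_zero _).2 (mem_radical.2 hy)
  · intro v w
    rw [apply_contrL_map, Submodule.liftQ_mkQ, Submodule.liftQ_mkQ, evalW_append]
    exact mem_radical.1 hx _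

theorem evalW_homogTot_eq_zero {n : ℕ} {x : TV θ} (hx : x ∈ homogTot θ n) {w : List (Fin θ)}
    (hw : w.length ≠ n) : evalW q w x = 0 := by
  refine Submodule.span_le (p := LinearMap.ker (evalW q w)).2 ?_ hx
  rintro _ ⟨v, rfl, rfl⟩
  exact evalW_word_eq_zero q hw

theorem exists_homog_decomposition (x : TV θ) :
    ∃ f : ℕ →₀ TV θ, (∀ n, f n ∈ homogTot θ n) ∧ (f.sum fun _ y => y) = x := by
  rw [← Submodule.mem_iSup_iff_exists_finsupp]
  suffices h : (⨆ n, homogTot θ n).mkQ = 0 by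
    rw [← Submodule.Quotient.mk_eq_zero]
    exact DFunLike.congr_fun h x
  refine linearMap_ext_word fun w => (Submodule.Quotient.mk_eq_zero _).2 ?_
  exact Submodule.mem_iSup_of_mem w.length (Submodule.subset_span ⟨w, rfl, rfl⟩)

theorem evalW_singleton (i : Fin θ) (x : TV θ) : evalW q [i] x = coord i x := by
  change counit θ (contrL (coord i) (cop q x)) = _
  rw [← AlgHom.toLinearMap_apply, apply_contrL_eq, contrR_counit_cop]

theorem eq_zero_of_mem_Wfil_one {x : TV θ} (hx : x ∈ Wfil θ 1) (h0 : counit θ x = 0)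
    (h1 : ∀ i, coord i x = 0) : x = 0 := by
  have hx' : x = counit θ x • 1 + ∑ i, coord i x • gen θ i := by
    let g : TV θ →ₗ[ℂ] TV θ := (counit θ).toLinearMap.smulRight 1
      + ∑ i, (coord i).smulRight (gen θ i)
    have hg : Set.EqOn (LinearMap.id (R := ℂ) (M := TV θ)) g
        (Submodule.span ℂ {x | ∃ w : List (Fin θ), w.length ≤ 1 ∧ x = wordElem θ w}) := by
      refine LinearMap.eqOn_span ?_
      rintro _ ⟨w, hw, rfl⟩
      match w with
      | [] => simp [g]
      | [j] => simp [g, wordElem_cons]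
    simpa [g] using hg hx
  simpa [h0, h1] using hx'

theorem homogTot_le_Wfil {m n : ℕ} (h : m ≤ n) : homogTot θ m ≤ Wfil θ n := by
  refine Submodule.span_mono ?_
  rintro _ ⟨w, hw, rfl⟩
  exact ⟨w, hw.trans_le h, rfl⟩

theorem mem_radical_of_homogTot {n : ℕ} {x : TV θ} (hx : x ∈ homogTot θ n)
    (h : ∀ w : List (Fin θ), w.length = n → evalW q w x = 0) : x ∈ radical q :=
  mem_radical.2 fun w => by
    by_cases hw : w.length = n
    · exact h w hw
    · exact evalW_homogTot_eq_zero hx hw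

theorem radical_isPreNicholsIdeal (S : BraidedStr θ q) : IsPreNicholsIdeal S (radical q) where
  mul_left := mul_left_mem_radical
  mul_right := mul_right_mem_radical
  coideal x hx := by
    rw [S.Δ_eq_cop]
    exact cop_mem_of_mem_radical hx
  homog_ge2 := by
    apply le_antisymm
    · intro x hx
      obtain ⟨f, hf, rfl⟩ := exists_homog_decomposition x
      have hmem : ∀ n, f n ∈ radical q := fun n =>
        mem_radical_of_homogTot (hf n) fun w hw => by
          rw [← mem_radical.1 hx w, Finsupp.sum, map_sum]
          by_cases hn : n ∈ f.support
          · rw [Finset.sum_eq_single_of_mem n hn]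
            intro m _ hm
            exact evalW_homogTot_eq_zero (hf m) (by omega)
          · rw [Finsupp.notMem_support_iff.1 hn, map_zero, Finset.sum_eq_zero]
            intro m hm
            refine evalW_homogTot_eq_zero (hf m) ?_
            rintro rfl
            exact hn (hw ▸ hm)
      refine Submodule.sum_mem _ fun n _ => ?_
      by_cases hn : 2 ≤ n
      · exact Submodule.subset_span ⟨hmem n, n, hn, hf n⟩
      · rw [eq_zero_of_mem_Wfil_one (x := f n) (homogTot_le_Wfil (by omega) (hf n))
          (mem_radical.1 (hmem n) [])
          fun i => by rw [← evalW_singleton (q := q)]; exact mem_radical.1 (hmem n) [i]]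
        exact zero_mem _
    · exact Submodule.span_le.2 fun x hx => hx.1

theorem radical_le_Jq (S : BraidedStr θ q) : radical q ≤ Jq S :=
  le_sSup (radical_isPreNicholsIdeal S)

end Radical

section Quotient

variable {θ : ℕ} {q : Fin θ → Fin θ → ℂˣ} {S : BraidedStr θ q} {I : Submodule ℂ (TV θ)}

/-- The diagonal automorphisms (or degenerations) of `T(V)` preserving `I`. -/
def twStable (I : Submodule ℂ (TV θ)) : Submonoid (Fin θ → ℂ) where
  carrier := {c | ∀ x ∈ I, tw c x ∈ I}
  one_mem' x hx := by rwa [tw_one]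
  mul_mem' hc hd x hx := by rw [← tw_tw]; exact hc _ (hd _ hx)

namespace IsPreNicholsIdeal

theorem evalW_eq_zero (hI : IsPreNicholsIdeal S I) {x : TV θ} (hx : x ∈ I) {w : List (Fin θ)}
    (hw : w.length ≤ 1) : evalW q w x = 0 := by
  rw [hI.homog_ge2] at hx
  refine Submodule.span_le (p := LinearMap.ker (evalW q w)).2 ?_ hx
  rintro y ⟨-, n, hn, hy⟩
  exact evalW_homogTot_eq_zero hy (by omega)

theorem counit_eq_zero (hI : IsPreNicholsIdeal S I) {x : TV θ} (hx : x ∈ I) : counit θ x = 0 :=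
  hI.evalW_eq_zero hx (w := []) (by simp)

theorem coord_eq_zero (hI : IsPreNicholsIdeal S I) {x : TV θ} (hx : x ∈ I) (i : Fin θ) :
    coord i x = 0 := by
  rw [← evalW_singleton (q := q)]
  exact hI.evalW_eq_zero hx (by simp)

theorem map_cop_eq_zero (hI : IsPreNicholsIdeal S I) {x : TV θ} (hx : x ∈ I) :
    TensorProduct.map I.mkQ I.mkQ (cop q x) = 0 := by
  rw [← LinearMap.mem_ker, ← mixedSub_eq_ker, ← S.Δ_eq_cop]
  exact hI.coideal x hx

theorem contrR_coord_mem (hI : IsPreNicholsIdeal S I) (j : Fin θ) {t : TV θ ⊗[ℂ] TV θ}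
    (ht : t ∈ mixedSub I) : contrR (coord j) t ∈ I := by
  refine Submodule.span_le (p := I.comap (contrR (coord j))).2 ?_ ht
  rintro _ (⟨a, b, ha, rfl⟩ | ⟨a, b, hb, rfl⟩)
  · simpa using Submodule.smul_mem _ _ ha
  · simp [hI.coord_eq_zero hb]

theorem row_mem_twStable (hI : IsPreNicholsIdeal S I) (j : Fin θ) :
    (fun k => (q j k : ℂ)) ∈ twStable I := by
  intro x hx
  have hsplit : contrR (coord j) (cop q (gen θ j * x)) =
      gen θ j * contrR (coord j) (cop q x) + tw (fun k => (q j k : ℂ)) x := by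
    conv_rhs => enter [2]; rw [← contrR_counit_cop q x]
    rw [cop_gen_mul]
    generalize cop q x = r
    induction r using TensorProduct.induction_on with
    | zero => simp
    | add s s' hs hs' =>
      simp only [map_add, mul_add] at hs hs' ⊢
      linear_combination (norm := module) hs + hs'
    | tmul c d => simp [coord_gen_mul]
  have h1 : contrR (coord j) (cop q (gen θ j * x)) ∈ I :=
    hI.contrR_coord_mem j (S.Δ_eq_cop ▸ hI.coideal _ (hI.mul_left _ _ hx))
  have h2 : contrR (coord j) (cop q x) ∈ I :=
    hI.contrR_coord_mem j (S.Δ_eq_cop ▸ hI.coideal _ hx)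
  rw [hsplit] at h1
  exact (Submodule.add_mem_iff_right _ (hI.mul_left _ _ h2)).1 h1

theorem chi_mem_twStable (hI : IsPreNicholsIdeal S I) (β : Fin θ → ℕ) :
    chi q β ∈ twStable I := by
  have h : chi q β = ∏ i, (fun k => (q i k : ℂ)) ^ β i := by
    ext k
    simp [chi]
  rw [h]
  exact Submonoid.prod_mem _ fun i _ => Submonoid.pow_mem _ (hI.row_mem_twStable i) _

/-- The action of `T(V)` on `T(V)/I` by left multiplication. -/
def quoL (hI : IsPreNicholsIdeal S I) : TV θ →ₐ[ℂ] Module.End ℂ (TV θ ⧸ I) :=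
  FreeAlgebra.lift ℂ fun i =>
    I.mapQ I (LinearMap.mulLeft ℂ (gen θ i)) fun x hx => hI.mul_left (gen θ i) x hx

theorem quoL_mk (hI : IsPreNicholsIdeal S I) (u x : TV θ) :
    hI.quoL u (I.mkQ x) = I.mkQ (u * x) := by
  induction u using gen_induction with
  | one => simp
  | add u v hu hv => rw [map_add, LinearMap.add_apply, hu, hv, add_mul, map_add]
  | smul c u hu => rw [map_smul, LinearMap.smul_apply, hu, smul_mul_assoc, map_smul]
  | gen_mul i u hu =>
    rw [map_mul, Module.End.mul_apply, hu, mul_assoc]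
    simp [quoL, gen]

theorem quoL_eq_zero (hI : IsPreNicholsIdeal S I) {u : TV θ} (hu : u ∈ I) : hI.quoL u = 0 := by
  ext x
  exact (hI.quoL_mk u x).trans ((Submodule.Quotient.mk_eq_zero I).2 (hI.mul_right x u hu))

/-- The diagonal automorphism of `T(V)/I` given by the character `q(β, ·)`. -/
def quoT (hI : IsPreNicholsIdeal S I) (β : Fin θ → ℕ) : Module.End ℂ (TV θ ⧸ I) :=
  I.mapQ I (tw (chi q β)).toLinearMap (hI.chi_mem_twStable β)

theorem quoT_mk (hI : IsPreNicholsIdeal S I) (β : Fin θ → ℕ) (x : TV θ) :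
    hI.quoT β (I.mkQ x) = I.mkQ (tw (chi q β) x) := rfl

/-- Left multiplication by `u ⊗ 1` on the braided tensor square of `T(V)/I`. -/
def actX (hI : IsPreNicholsIdeal S I) :
    TV θ →ₐ[ℂ] Module.End ℂ ((TV θ ⧸ I) ⊗[ℂ] (TV θ ⧸ I)) :=
  (Module.End.rTensorAlgHom ℂ (TV θ ⧸ I) (TV θ ⧸ I)).comp hI.quoL

theorem actX_eq (hI : IsPreNicholsIdeal S I) (u : TV θ) :
    hI.actX u = TensorProduct.map (hI.quoL u) LinearMap.id := rfl

/-- Left multiplication by `1 ⊗ u` on the braided tensor square of `T(V)/I`. -/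
def actY (hI : IsPreNicholsIdeal S I) :
    TV θ →ₐ[ℂ] Module.End ℂ ((TV θ ⧸ I) ⊗[ℂ] (TV θ ⧸ I)) :=
  FreeAlgebra.lift ℂ fun i => TensorProduct.map (hI.quoT (δ θ i)) (hI.quoL (gen θ i))

theorem actY_gen (hI : IsPreNicholsIdeal S I) (i : Fin θ) :
    hI.actY (gen θ i) = TensorProduct.map (hI.quoT (δ θ i)) (hI.quoL (gen θ i)) := by
  simp [actY, gen]

theorem actY_eq (hI : IsPreNicholsIdeal S I) {β : Fin θ → ℕ} {u : TV θ} (hu : u ∈ homogD θ β) :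
    hI.actY u = TensorProduct.map (hI.quoT β) (hI.quoL u) := by
  refine Submodule.span_induction
    (p := fun u _ => hI.actY u = TensorProduct.map (hI.quoT β) (hI.quoL u)) ?_ (by simp)
    (fun x y _ _ hx hy => by rw [map_add, hx, hy, map_add, TensorProduct.map_add_right])
    (fun c x _ hx => by rw [map_smul, hx, map_smul, TensorProduct.map_smul_right]) hu
  rintro _ ⟨w, rfl, rfl⟩
  clear hu
  induction w with
  | nil =>
    rw [wordElem_nil, map_one, map_one]
    have : hI.quoT (degW θ []) = 1 := by
      ext x
      change I.mkQ (tw (chi q (degW θ [])) x) = I.mkQ x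
      have h1 : chi q (degW θ []) = 1 := by ext k; simp [chi, degW_nil]
      rw [h1, tw_one]
    rw [this]
    exact TensorProduct.map_one.symm
  | cons i w ih =>
    rw [wordElem_cons, map_mul, map_mul, ih, actY_gen,
      ← TensorProduct.map_mul]
    congr 1
    ext x
    change I.mkQ (tw _ (tw _ x)) = I.mkQ (tw _ x)
    rw [tw_tw, ← chi_add, degW_cons]

theorem actY_mul_actX (hI : IsPreNicholsIdeal S I) {a b : Fin θ → ℕ} {u v : TV θ}
    (hu : u ∈ homogD θ a) (hv : v ∈ homogD θ b) :
    hI.actY u * hI.actX v = qf q a b • (hI.actX v * hI.actY u) := by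
  rw [hI.actY_eq hu, hI.actX_eq]
  refine TensorProduct.ext' fun x y => ?_
  obtain ⟨x, rfl⟩ := I.mkQ_surjective x
  simp only [Module.End.mul_apply, LinearMap.smul_apply, TensorProduct.map_tmul,
    LinearMap.id_apply, quoT_mk, quoL_mk, map_mul, tw_chi q a hv, TensorProduct.smul_tmul',
    smul_mul_assoc, map_smul]

/-- The action of `T(V)` on the braided tensor square of `T(V)/I` through the coproduct. -/
def actΔ (hI : IsPreNicholsIdeal S I) :
    TV θ →ₐ[ℂ] Module.End ℂ ((TV θ ⧸ I) ⊗[ℂ] (TV θ ⧸ I)) :=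
  FreeAlgebra.lift ℂ fun i => hI.actX (gen θ i) + hI.actY (gen θ i)

theorem actΔ_gen (hI : IsPreNicholsIdeal S I) (i : Fin θ) :
    hI.actΔ (gen θ i) = hI.actX (gen θ i) + hI.actY (gen θ i) := by
  simp [actΔ, gen]

theorem actΔ_map (hI : IsPreNicholsIdeal S I) (u : TV θ) (t : TV θ ⊗[ℂ] TV θ) :
    hI.actΔ u (TensorProduct.map I.mkQ I.mkQ t) = TensorProduct.map I.mkQ I.mkQ (coact q u t) := by
  induction u using gen_induction generalizing t with
  | one => simp
  | add u v hu hv => simp only [map_add, LinearMap.add_apply, hu, hv]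
  | smul c u hu => simp only [map_smul, LinearMap.smul_apply, hu]
  | gen_mul i u hu =>
    rw [map_mul, Module.End.mul_apply, hu, map_mul, Module.End.mul_apply]
    generalize coact q u t = r
    rw [coact_gen, actΔ_gen, actX_eq, actY_gen]
    induction r using TensorProduct.induction_on with
    | zero => simp
    | add s s' hs hs' => simp only [map_add, hs, hs']
    | tmul c d =>
      simp only [LinearMap.add_apply, TensorProduct.map_tmul, LinearMap.id_apply, quoT_mk,
        quoL_mk, map_add, opX_tmul, opY_tmul, chi_δ]

/-- The class of `u` in `T(V)/I` is primitive, expressed by means of multiplication operators. -/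
def IsPrim (hI : IsPreNicholsIdeal S I) (u : TV θ) : Prop := hI.actΔ u = hI.actX u + hI.actY u

theorem isPrim_brk (hI : IsPreNicholsIdeal S I) {a b : Fin θ → ℕ} {u v : TV θ}
    (hu : u ∈ homogD θ a) (hv : v ∈ homogD θ b) (pu : hI.IsPrim u) (pv : hI.IsPrim v)
    (hab : qf q a b * qf q b a = 1) : hI.IsPrim (brk q a b u v) := by
  simp only [IsPrim, brk, map_sub, map_mul, map_smul] at *
  rw [pu, pv]
  simp only [mul_add, add_mul, hI.actY_mul_actX hu hv, hI.actY_mul_actX hv hu]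
  have h : qf q a b • qf q b a • (hI.actX u * hI.actY v) = hI.actX u * hI.actY v := by
    rw [smul_smul, hab, one_smul]
  simp only [smul_add, h]
  abel

end IsPreNicholsIdeal

end Quotient

section Growth

theorem finrank_map_add_finrank_inf_ker {M M' : Type*} [AddCommGroup M] [Module ℂ M]
    [AddCommGroup M'] [Module ℂ M'] (f : M →ₗ[ℂ] M') (A : Submodule ℂ M) [FiniteDimensional ℂ A] :
    Module.finrank ℂ (A.map f) + Module.finrank ℂ ↥(A ⊓ LinearMap.ker f) = Module.finrank ℂ A := by
  rw [← LinearMap.finrank_range_add_finrank_ker (f.domRestrict A), LinearMap.range_domRestrict]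
  congr 1
  rw [LinearMap.ker_domRestrict, ← Submodule.map_comap_subtype]
  exact Submodule.finrank_map_subtype_eq A _

theorem finrank_map_mkQ_step {M F : Type*} [AddCommGroup M] [Module ℂ M] [AddCommGroup F]
    [Module ℂ F] {V V' K N : Submodule ℂ M} [FiniteDimensional ℂ V'] (hVV' : V ≤ V')
    (ev : M →ₗ[ℂ] F) (hV : ∀ x ∈ V, ev x = 0) (hK : ∀ x ∈ V', x ∈ K → ev x = 0)
    (hN : ∀ x ∈ V', ev x = 0 → x ∈ V ⊔ N)
    (h : Module.finrank ℂ (V.map N.mkQ) ≤ Module.finrank ℂ (V.map K.mkQ)) :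
    Module.finrank ℂ (V'.map N.mkQ) ≤ Module.finrank ℂ (V'.map K.mkQ) := by
  have hU : FiniteDimensional ℂ ↥(V' ⊓ LinearMap.ker ev) :=
    Submodule.finiteDimensional_inf_left _ _
  have hU' : V ≤ V' ⊓ LinearMap.ker ev := fun x hx => ⟨hVV' hx, hV x hx⟩
  have hev := finrank_map_add_finrank_inf_ker ev V'
  have hN1 := finrank_map_add_finrank_inf_ker N.mkQ V'
  have hN2 := finrank_map_add_finrank_inf_ker N.mkQ (V' ⊓ LinearMap.ker ev)
  have hK1 := finrank_map_add_finrank_inf_ker K.mkQ V'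
  have hK2 := finrank_map_add_finrank_inf_ker K.mkQ (V' ⊓ LinearMap.ker ev)
  rw [Submodule.ker_mkQ] at hN1 hN2 hK1 hK2
  have hKeq : V' ⊓ LinearMap.ker ev ⊓ K = V' ⊓ K :=
    le_antisymm (inf_le_inf_right _ inf_le_left) fun x hx => ⟨⟨hx.1, hK x hx.1 hx.2⟩, hx.2⟩
  rw [hKeq] at hK2
  have hfin : FiniteDimensional ℂ ↥(V' ⊓ N) := Submodule.finiteDimensional_inf_left _ _
  have h1 : Module.finrank ℂ ↥(V' ⊓ LinearMap.ker ev ⊓ N) ≤ Module.finrank ℂ ↥(V' ⊓ N) :=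
    Submodule.finrank_mono (inf_le_inf_right _ inf_le_left)
  have hVfin : FiniteDimensional ℂ V := Submodule.finiteDimensional_of_le hVV'
  have h2 : Module.finrank ℂ ((V' ⊓ LinearMap.ker ev).map N.mkQ) ≤
      Module.finrank ℂ (V.map N.mkQ) := by
    refine Submodule.finrank_mono ?_
    rintro _ ⟨x, ⟨hx, hx0⟩, rfl⟩
    obtain ⟨v, hv, n, hn, rfl⟩ := Submodule.mem_sup.1 (hN x hx hx0)
    exact ⟨v, hv, by simp [(Submodule.Quotient.mk_eq_zero N).2 hn]⟩
  have h3 : Module.finrank ℂ (V.map K.mkQ) ≤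
      Module.finrank ℂ ((V' ⊓ LinearMap.ker ev).map K.mkQ) :=
    Submodule.finrank_mono (Submodule.map_mono hU')
  omega

variable {θ : ℕ} {q : Fin θ → Fin θ → ℂˣ}

instance finiteDimensional_Wfil (n : ℕ) : FiniteDimensional ℂ (Wfil θ n) := by
  refine FiniteDimensional.span_of_finite ℂ ?_
  refine ((List.finite_length_le (Fin θ) n).image (wordElem θ)).subset ?_
  rintro _ ⟨w, hw, rfl⟩
  exact ⟨w, hw, rfl⟩

theorem Wfil_mono {m n : ℕ} (h : m ≤ n) : Wfil θ m ≤ Wfil θ n := by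
  refine Submodule.span_mono ?_
  rintro _ ⟨w, hw, rfl⟩
  exact ⟨w, hw.trans h, rfl⟩

theorem Wfil_succ_le (n : ℕ) : Wfil θ (n + 1) ≤ Wfil θ n ⊔ homogTot θ (n + 1) := by
  refine Submodule.span_le.2 ?_
  rintro _ ⟨w, hw, rfl⟩
  rcases Nat.lt_or_ge n w.length with h | h
  · exact Submodule.mem_sup_right (Submodule.subset_span ⟨w, by omega, rfl⟩)
  · exact Submodule.mem_sup_left (Submodule.subset_span ⟨w, h, rfl⟩)

theorem mul_mem_Wfil {m n : ℕ} {x y : TV θ} (hx : x ∈ Wfil θ m) (hy : y ∈ Wfil θ n) :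
    x * y ∈ Wfil θ (m + n) := by
  have h := Submodule.mul_mem_mul hx hy
  rw [Wfil, Wfil, Submodule.span_mul_span] at h
  refine Submodule.span_mono ?_ h
  rintro _ ⟨_, ⟨v, hv, rfl⟩, _, ⟨w, hw, rfl⟩, rfl⟩
  exact ⟨v ++ w, by simp; omega, (wordElem_append v w).symm⟩

theorem sum_degW (w : List (Fin θ)) : ∑ k, degW θ w k = w.length := by
  induction w with
  | nil => simp [degW]
  | cons i w ih => simp [degW_cons, Finset.sum_add_distrib, ih, δ, add_comm]

theorem homogD_le_homogTot (d : Fin θ → ℕ) : homogD θ d ≤ homogTot θ (∑ k, d k) := by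
  refine Submodule.span_mono ?_
  rintro _ ⟨w, rfl, rfl⟩
  exact ⟨w, (sum_degW w).symm, rfl⟩

theorem evalW_Wfil_eq_zero {n : ℕ} {x : TV θ} (hx : x ∈ Wfil θ n) {w : List (Fin θ)}
    (hw : n < w.length) : evalW q w x = 0 := by
  refine Submodule.span_le (p := LinearMap.ker (evalW q w)).2 ?_ hx
  rintro _ ⟨v, hv, rfl⟩
  exact evalW_word_eq_zero q (by omega)

theorem finrank_radical_le {K : Submodule ℂ (TV θ)}
    (hK : ∀ n, ∀ x ∈ Wfil θ n, x ∈ K → ∀ w : List (Fin θ), w.length = n → evalW q w x = 0)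
    (n : ℕ) : Module.finrank ℂ ((Wfil θ n).map (radical q).mkQ) ≤
      Module.finrank ℂ ((Wfil θ n).map K.mkQ) := by
  let ev (n : ℕ) : TV θ →ₗ[ℂ] ({w : List (Fin θ) // w.length = n} → ℂ) :=
    LinearMap.pi fun w => evalW q w.1
  have hev : ∀ n, ∀ x ∈ Wfil θ n, x ∈ K → ev n x = 0 := fun n x hx hxK =>
    funext fun w => hK n x hx hxK w.1 w.2
  have hrad : ∀ n, ∀ x ∈ homogTot θ n, ev n x = 0 → x ∈ radical q := fun n x hx h =>
    mem_radical_of_homogTot hx fun w hw => congrFun h ⟨w, hw⟩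
  induction n with
  | zero =>
    refine finrank_map_mkQ_step (V := ⊥) bot_le (ev 0)
      (fun x hx => by rw [(Submodule.mem_bot ℂ).1 hx, map_zero]) (hev 0) ?_
      (by rw [Submodule.map_bot, Submodule.map_bot, finrank_bot, finrank_bot])
    intro x hx h
    refine Submodule.mem_sup_right (hrad 0 x (Submodule.span_mono ?_ hx) h)
    rintro _ ⟨w, hw, rfl⟩
    exact ⟨w, by omega, rfl⟩
  | succ n ih =>
    have hV : ∀ x ∈ Wfil θ n, ev (n + 1) x = 0 := fun x hx =>
      funext fun w => evalW_Wfil_eq_zero hx (by rw [w.2]; exact n.lt_succ_self)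
    refine finrank_map_mkQ_step (Wfil_mono n.le_succ) (ev (n + 1)) hV (hev _) ?_ ih
    intro x hx h
    obtain ⟨v, hv, y, hy, rfl⟩ := Submodule.mem_sup.1 (Wfil_succ_le n hx)
    rw [map_add, hV v hv, zero_add] at h
    exact Submodule.add_mem_sup hv (hrad _ y hy h)

theorem iterF_word_eq_evalW {g : Fin θ → TV θ →ₗ[ℂ] ℂ} (h1 : ∀ i, g i 1 = 0)
    (hg : ∀ i j, g i (gen θ j) = if j = i then 1 else 0) {v w : List (Fin θ)}
    (hvw : v.length ≤ w.length) : iterF q g w (wordElem θ v) = evalW q w (wordElem θ v) := by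
  induction w generalizing v with
  | nil => rfl
  | cons i w ih =>
    refine linearMap_eq_of_wordTensors (f := iterF q g w ∘ₗ contrL (g i))
      (g := evalW q w ∘ₗ contrL (coord i)) ?_ (cop_word_mem q v)
    intro a b hab
    rw [List.length_cons] at hvw
    simp only [LinearMap.comp_apply, contrL_tmul, map_smul]
    match a with
    | [] => simp [h1]
    | [j] => rw [ih (by simp at hab; omega), wordElem_cons, wordElem_nil, mul_one, hg, coord_gen]
    | j :: k :: a =>
      have hb : b.length < w.length := by simp at hab; omega
      rw [ih hb.le, evalW_word_eq_zero q hb.ne', smul_zero, smul_zero]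

theorem iterF_Wfil_eq_evalW {g : Fin θ → TV θ →ₗ[ℂ] ℂ} (h1 : ∀ i, g i 1 = 0)
    (hg : ∀ i j, g i (gen θ j) = if j = i then 1 else 0) {w : List (Fin θ)}
    {x : TV θ} (hx : x ∈ Wfil θ w.length) : iterF q g w x = evalW q w x := by
  refine LinearMap.eqOn_span (s := {x | ∃ v : List (Fin θ), v.length ≤ w.length ∧
    x = wordElem θ v}) ?_ hx
  rintro _ ⟨v, hv, rfl⟩
  exact iterF_word_eq_evalW h1 hg hv

end Growth

section Subalgebra

variable {θ θ' : ℕ} {q : Fin θ → Fin θ → ℂˣ} {S : BraidedStr θ q} {I : Submodule ℂ (TV θ)}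

theorem tw_lift_eq {q' : Fin θ' → Fin θ' → ℂˣ} {e : Fin θ' → Fin θ → ℕ} {y : Fin θ' → TV θ}
    (hy : ∀ j, y j ∈ homogD θ (e j)) (hq' : ∀ j k, (q' j k : ℂ) = qf q (e j) (e k)) (j : Fin θ')
    (x : TV θ') : tw (chi q (e j)) (FreeAlgebra.lift ℂ y x) =
      FreeAlgebra.lift ℂ y (tw (fun k => (q' j k : ℂ)) x) := by
  have h : (tw (chi q (e j))).comp (FreeAlgebra.lift ℂ y) =
      (FreeAlgebra.lift ℂ y).comp (tw fun k => (q' j k : ℂ)) := by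
    ext k
    change tw (chi q (e j)) (FreeAlgebra.lift ℂ y (FreeAlgebra.ι ℂ k)) =
      FreeAlgebra.lift ℂ y (tw _ (gen θ' k))
    rw [tw_gen, map_smul, gen, FreeAlgebra.lift_ι_apply, tw_chi q _ (hy k), hq']
  exact DFunLike.congr_fun h x

namespace IsPreNicholsIdeal

theorem map_cop_lift (hI : IsPreNicholsIdeal S I) {q' : Fin θ' → Fin θ' → ℂˣ}
    {e : Fin θ' → Fin θ → ℕ} {y : Fin θ' → TV θ} (hy : ∀ j, y j ∈ homogD θ (e j))
    (hq' : ∀ j k, (q' j k : ℂ) = qf q (e j) (e k)) (hp : ∀ j, hI.IsPrim (y j)) (x : TV θ') :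
    TensorProduct.map I.mkQ I.mkQ (cop q (FreeAlgebra.lift ℂ y x)) =
      TensorProduct.map (I.mkQ ∘ₗ (FreeAlgebra.lift ℂ y).toLinearMap)
        (I.mkQ ∘ₗ (FreeAlgebra.lift ℂ y).toLinearMap) (cop q' x) := by
  have hgen : ∀ j, FreeAlgebra.lift ℂ y (gen θ' j) = y j := by simp [gen]
  induction x using gen_induction with
  | one => simp
  | add x x' hx hx' => simp only [map_add, hx, hx']
  | smul c x hx => simp only [map_smul, hx]
  | gen_mul j x hx =>
    rw [map_mul, cop_mul, ← hI.actΔ_map, hx, cop_gen_mul, hgen, hp j,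
      actX_eq, hI.actY_eq (hy j)]
    generalize cop q' x = r
    induction r using TensorProduct.induction_on with
    | zero => simp
    | add s s' hs hs' =>
      simp only [map_add] at hs hs' ⊢
      linear_combination (norm := module) hs + hs'
    | tmul a b =>
      simp only [LinearMap.add_apply, TensorProduct.map_tmul, LinearMap.comp_apply,
        AlgHom.toLinearMap_apply, LinearMap.id_apply, quoL_mk, quoT_mk, tw_lift_eq hy hq', map_add,
        opX_tmul, opY_tmul, map_mul, hgen]

theorem iterF_eq_zero (hI : IsPreNicholsIdeal S I) {ι : Type*} {f : ι → TV θ →ₗ[ℂ] ℂ}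
    (hf : ∀ i, ∀ x ∈ I, f i x = 0) (w : List ι) {x : TV θ} (hx : x ∈ I) :
    iterF q f w x = 0 := by
  induction w generalizing x with
  | nil => exact hI.counit_eq_zero hx
  | cons i w ih =>
    have hi : I ≤ LinearMap.ker (f i) := hf i
    have hw : I ≤ LinearMap.ker (iterF q f w) := fun x hx => ih hx
    have h := apply_contrL_map (I.liftQ (f i) hi) (I.liftQ (iterF q f w) hw) I.mkQ I.mkQ (cop q x)
    rw [Submodule.liftQ_mkQ, Submodule.liftQ_mkQ, hI.map_cop_eq_zero hx, map_zero, map_zero] at h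
    exact h.symm

theorem iterF_lift (hI : IsPreNicholsIdeal S I) {q' : Fin θ' → Fin θ' → ℂˣ}
    {e : Fin θ' → Fin θ → ℕ} {y : Fin θ' → TV θ} (hy : ∀ j, y j ∈ homogD θ (e j))
    (hq' : ∀ j k, (q' j k : ℂ) = qf q (e j) (e k)) (hp : ∀ j, hI.IsPrim (y j))
    (hy0 : ∀ j, counit θ (y j) = 0) {ι : Type*} {f : ι → TV θ →ₗ[ℂ] ℂ}
    (hf : ∀ i, ∀ x ∈ I, f i x = 0) (w : List ι) (x : TV θ') :
    iterF q f w (FreeAlgebra.lift ℂ y x) =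
      iterF q' (fun i => f i ∘ₗ (FreeAlgebra.lift ℂ y).toLinearMap) w x := by
  induction w generalizing x with
  | nil =>
    have h : (counit θ).comp (FreeAlgebra.lift ℂ y) = counit θ' := by
      ext k
      simp [counit] at hy0 ⊢
      exact hy0 k
    exact DFunLike.congr_fun h x
  | cons i w ih =>
    have hi : I ≤ LinearMap.ker (f i) := hf i
    have hw : I ≤ LinearMap.ker (iterF q f w) := fun x hx => hI.iterF_eq_zero hf w hx
    have h := apply_contrL_map (I.liftQ (f i) hi) (I.liftQ (iterF q f w) hw)
      I.mkQ I.mkQ (cop q (FreeAlgebra.lift ℂ y x))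
    rw [hI.map_cop_lift hy hq' hp, apply_contrL_map, ← LinearMap.comp_assoc, ← LinearMap.comp_assoc,
      Submodule.liftQ_mkQ, Submodule.liftQ_mkQ] at h
    exact h.symm.trans (ih _)

/-- A pre-Nichols algebra of finite GKdim dominates the Nichols algebra of any braided subspace
of primitive elements. -/
theorem finGK_Jq (hI : IsPreNicholsIdeal S I) (hGK : FinGK I) {q' : Fin θ' → Fin θ' → ℂˣ}
    (S' : BraidedStr θ' q')
    {e : Fin θ' → Fin θ → ℕ} {y : Fin θ' → TV θ} (hy : ∀ j, y j ∈ homogD θ (e j))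
    (hq' : ∀ j k, (q' j k : ℂ) = qf q (e j) (e k)) (hp : ∀ j, hI.IsPrim (y j))
    (hy0 : ∀ j, counit θ (y j) = 0) {f : Fin θ' → TV θ →ₗ[ℂ] ℂ}
    (hf : ∀ i, ∀ x ∈ I, f i x = 0) (hf1 : ∀ i, f i 1 = 0)
    (hfy : ∀ i j, f i (y j) = if j = i then 1 else 0) : FinGK (Jq S') := by
  let φ := FreeAlgebra.lift ℂ y
  have hK : ∀ n, ∀ x ∈ Wfil θ' n, x ∈ LinearMap.ker (I.mkQ ∘ₗ φ.toLinearMap) →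
      ∀ w : List (Fin θ'), w.length = n → evalW q' w x = 0 := by
    rintro n x hx hxK w rfl
    rw [← iterF_Wfil_eq_evalW (g := fun i => f i ∘ₗ φ.toLinearMap) (by simp [hf1])
      (by simp [φ, gen, hfy]) hx, ← hI.iterF_lift hy hq' hp hy0 hf]
    exact hI.iterF_eq_zero hf w ((Submodule.Quotient.mk_eq_zero I).1 hxK)
  let m := ∑ j, ∑ k, e j k
  have hym : ∀ j, y j ∈ Wfil θ m := fun j =>
    homogTot_le_Wfil (Finset.single_le_sum (f := fun j => ∑ k, e j k) (fun _ _ => Nat.zero_le _)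
      (Finset.mem_univ j)) (homogD_le_homogTot _ (hy j))
  have hword : ∀ w : List (Fin θ'), φ (wordElem θ' w) ∈ Wfil θ (m * w.length) := by
    intro w
    induction w with
    | nil => exact Submodule.subset_span ⟨[], by simp, by simp⟩
    | cons j w ih =>
      rw [wordElem_cons, map_mul, List.length_cons, Nat.mul_succ, add_comm]
      exact mul_mem_Wfil (by simpa [φ, gen] using hym j) ih
  have hWfil : ∀ n, (Wfil θ' n).map φ.toLinearMap ≤ Wfil θ (m * n) := by
    intro n
    rw [Wfil, Submodule.map_span_le]
    rintro _ ⟨w, hw, rfl⟩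
    exact Wfil_mono (Nat.mul_le_mul_left m hw) (hword w)
  have hdim : ∀ n, Module.finrank ℂ ((Wfil θ' n).map (Jq S').mkQ) ≤
      Module.finrank ℂ ((Wfil θ (m * n)).map I.mkQ) := by
    intro n
    calc _ = Module.finrank ℂ
          (((Wfil θ' n).map (radical q').mkQ).map (Submodule.factor (radical_le_Jq S'))) := by
          rw [← Submodule.map_comp, Submodule.factor_comp_mk]
      _ ≤ Module.finrank ℂ ((Wfil θ' n).map (radical q').mkQ) := Submodule.finrank_map_le _ _
      _ ≤ Module.finrank ℂ ((Wfil θ' n).map (LinearMap.ker (I.mkQ ∘ₗ φ.toLinearMap)).mkQ) :=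
          finrank_radical_le hK n
      _ = Module.finrank ℂ ((Wfil θ' n).map (I.mkQ ∘ₗ φ.toLinearMap)) := by
          have h1 := finrank_map_add_finrank_inf_ker (I.mkQ ∘ₗ φ.toLinearMap) (Wfil θ' n)
          have h2 := finrank_map_add_finrank_inf_ker
            (LinearMap.ker (I.mkQ ∘ₗ φ.toLinearMap)).mkQ (Wfil θ' n)
          rw [Submodule.ker_mkQ] at h2
          omega
      _ ≤ _ := by
          rw [Submodule.map_comp]
          exact Submodule.finrank_mono (Submodule.map_mono (hWfil n))
  obtain ⟨C, d, hCd⟩ := hGK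
  refine ⟨C * (m + 1) ^ d, d, fun n => (hdim n).trans ((hCd _).trans ?_)⟩
  rw [mul_assoc, ← mul_pow]
  gcongr
  nlinarith

end IsPreNicholsIdeal

end Subalgebra

section RootSystems

variable {θ : ℕ}

theorem cij_eq_neg_one {q : Fin θ → Fin θ → ℂˣ} {i j : Fin θ} (hij : i ≠ j) (h : qtil q i j ≠ 1)
    (h' : (q i i : ℂ) = -1 ∨ (q i i : ℂ) * qtil q i j = 1) : cij q i j = -1 := by
  have h1 : 1 ∈ cSet q i j := by
    simp only [cSet, Set.mem_ofPred_eq, qnum, Finset.sum_range_succ, Finset.sum_range_zero]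
    rcases h' with h' | h'
    · rw [h']; ring
    · rw [pow_one, h', sub_self, mul_zero]
  have h0 : 0 ∉ cSet q i j := by
    simpa [cSet, qnum, sub_eq_zero] using fun h'' => h (Eq.symm h'')
  have h2 : sInf (cSet q i j) = 1 := by
    refine le_antisymm (Nat.sInf_le h1) (Nat.one_le_iff_ne_zero.2 fun hs => h0 ?_)
    exact hs ▸ Nat.sInf_mem ⟨1, h1⟩
  rw [cij, if_neg hij, h2]
  rfl

theorem cij_self (q : Fin θ → Fin θ → ℂˣ) (i : Fin θ) : cij q i i = 2 := if_pos rfl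

theorem reflectMat_of_ne {q : Fin θ → Fin θ → ℂˣ} {i : Fin θ}
    (hc : ∀ j, j ≠ i → cij q i j = -1) {j k : Fin θ} (hj : j ≠ i) (hk : k ≠ i) :
    reflectMat q i j k = q j k * q j i * q i k * q i i := by
  simp [reflectMat, hc j hj, hc k hk]

theorem reflectMat_self (q : Fin θ → Fin θ → ℂˣ) (i : Fin θ) : reflectMat q i i i = q i i := by
  rw [reflectMat, cij_self, mul_assoc, mul_assoc, ← zpow_add, ← zpow_add]
  simp

theorem qtil_reflectMat_self {q : Fin θ → Fin θ → ℂˣ} {i : Fin θ}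
    (hc : ∀ j, j ≠ i → cij q i j = -1) {j : Fin θ} (hj : j ≠ i) :
    qtil (reflectMat q i) i j = (qtil q i j)⁻¹ * ((q i i : ℂ) ^ 2)⁻¹ := by
  have h1 := (q i i).ne_zero
  have h2 := (q i j).ne_zero
  have h3 := (q j i).ne_zero
  simp only [qtil, reflectMat, cij_self, hc j hj, Units.val_mul, Units.val_zpow_eq_zpow_val]
  norm_num [zpow_neg]
  field_simp

theorem qtil_reflectMat_of_ne {q : Fin θ → Fin θ → ℂˣ} {i : Fin θ}
    (hc : ∀ j, j ≠ i → cij q i j = -1) {j k : Fin θ} (hj : j ≠ i) (hk : k ≠ i) :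
    qtil (reflectMat q i) j k = qtil q j k * qtil q i j * qtil q i k * (q i i : ℂ) ^ 2 := by
  simp only [qtil, reflectMat_of_ne hc hj hk, reflectMat_of_ne hc hk hj, Units.val_mul]
  ring

theorem sRefl_apply_self {q : Fin θ → Fin θ → ℂˣ} {i : Fin θ}
    (hc : ∀ j, j ≠ i → cij q i j = -1) (β : Fin θ → ℤ) :
    sRefl q i β i = -β i + ∑ j ∈ Finset.univ.erase i, β j := by
  have h : ∑ j ∈ Finset.univ.erase i, cij q i j * β j = ∑ j ∈ Finset.univ.erase i, -β j :=
    Finset.sum_congr rfl fun j hj => by rw [hc j (Finset.ne_of_mem_erase hj), neg_one_mul]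
  rw [sRefl, if_pos rfl, ← Finset.add_sum_erase _ _ (Finset.mem_univ i), cij_self, h,
    Finset.sum_neg_distrib]
  ring

theorem sRefl_apply_of_ne (q : Fin θ → Fin θ → ℂˣ) {i k : Fin θ} (hk : k ≠ i) (β : Fin θ → ℤ) :
    sRefl q i β k = β k := by
  rw [sRefl, if_neg hk, sub_zero]

/-- The Dynkin diagram of `q` is complete, with edges `ξ⁻¹` and vertices `ξ` away from `1`. -/
def IsCompleteDiagram (ξ : ℂ) (q : Fin 4 → Fin 4 → ℂˣ) : Prop :=
  (∀ i, i ≠ 1 → (q i i : ℂ) = ξ) ∧ ∀ i j, i ≠ j → qtil q i j = ξ⁻¹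

namespace IsCompleteDiagram

variable {ξ : ℂ} {q : Fin 4 → Fin 4 → ℂˣ}

theorem cij_eq (h : IsCompleteDiagram ξ q) (hξ : IsPrimitiveRoot ξ 3) {i : Fin 4} (hi : i ≠ 1)
    (j : Fin 4) (hj : j ≠ i) : cij q i j = -1 := by
  have hξ0 : ξ ≠ 0 := hξ.ne_zero (by norm_num)
  have hξ1 : ξ ≠ 1 := hξ.ne_one (by norm_num)
  refine cij_eq_neg_one hj.symm ?_ (Or.inr ?_)
  · rw [h.2 i j hj.symm]
    exact inv_ne_one.2 hξ1
  · rw [h.2 i j hj.symm, h.1 i hi, mul_inv_cancel₀ hξ0]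

theorem reflect (h : IsCompleteDiagram ξ q) (hξ : IsPrimitiveRoot ξ 3) {i : Fin 4} (hi : i ≠ 1) :
    IsCompleteDiagram ξ (reflectMat q i) := by
  have hξ0 : ξ ≠ 0 := hξ.ne_zero (by norm_num)
  have hc := h.cij_eq hξ hi
  refine ⟨fun j hj => ?_, fun j k hjk => ?_⟩
  · by_cases hji : j = i
    · rw [hji, reflectMat_self, h.1 i hi]
    · have h2 := h.2 i j (Ne.symm hji)
      rw [reflectMat_of_ne hc hji hji, Units.val_mul, Units.val_mul, Units.val_mul, h.1 j hj,
        h.1 i hi]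
      rw [qtil] at h2
      field_simp at h2 ⊢
      linear_combination h2
  · have hself : ∀ k, k ≠ i → qtil (reflectMat q i) i k = ξ⁻¹ := fun k hk => by
      rw [qtil_reflectMat_self hc hk, h.1 i hi, h.2 i k hk.symm]
      field_simp
    by_cases hji : j = i
    · rw [hji]
      exact hself k (hji ▸ hjk.symm)
    by_cases hki : k = i
    · rw [hki, qtil, mul_comm]
      exact hself j hji
    rw [qtil_reflectMat_of_ne hc hji hki, h.1 i hi, h.2 j k hjk, h.2 i j (Ne.symm hji),
      h.2 i k (Ne.symm hki)]
    field_simp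

end IsCompleteDiagram

/-- A star with four vertices `-1` and three edges `ξ ∈ G₃'` has infinitely many real roots. -/
theorem not_finiteRootSystem_star {ξ : ℂ} (hξ : IsPrimitiveRoot ξ 3) {q : Fin 4 → Fin 4 → ℂˣ}
    (hq : ∀ i, (q i i : ℂ) = -1) (hq1 : ∀ j, j ≠ 1 → qtil q 1 j = ξ)
    (hq0 : ∀ j k, j ≠ 1 → k ≠ 1 → j ≠ k → qtil q j k = 1) : ¬ FiniteRootSystem q := by
  have hξ0 : ξ ≠ 0 := hξ.ne_zero (by norm_num)
  have hξ3 : ξ ^ 3 = 1 := hξ.pow_eq_one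
  have hc : ∀ j, j ≠ 1 → cij q 1 j = -1 := fun j hj =>
    cij_eq_neg_one hj.symm (by rw [hq1 j hj]; exact hξ.ne_one (by norm_num)) (Or.inl (hq 1))
  have hP : IsCompleteDiagram ξ (reflectMat q 1) := by
    have hself : ∀ k, k ≠ 1 → qtil (reflectMat q 1) 1 k = ξ⁻¹ := fun k hk => by
      rw [qtil_reflectMat_self hc hk, hq, hq1 k hk]
      norm_num
    refine ⟨fun j hj => ?_, fun j k hjk => ?_⟩
    · rw [reflectMat_of_ne hc hj hj, Units.val_mul, Units.val_mul, Units.val_mul, hq, hq,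
        ← hq1 j hj, qtil]
      ring
    · by_cases hj : j = 1
      · rw [hj]
        exact hself k (hj ▸ hjk.symm)
      by_cases hk : k = 1
      · rw [hk, qtil, mul_comm]
        exact hself j hj
      rw [qtil_reflectMat_of_ne hc hj hk, hq0 j k hj hk hjk, hq1 j hj, hq1 k hk, hq]
      field_simp
      linear_combination hξ3
  have hroots : ∀ N : ℕ, ∃ p β, IsCompleteDiagram ξ p ∧ ReachRoot q p β ∧ β 1 = 1 ∧ 0 ≤ β 0 ∧
      β 0 ≤ β 2 ∧ β 2 ≤ β 3 ∧ (N : ℤ) ≤ β 3 := by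
    intro N
    induction N with
    | zero =>
      refine ⟨_, _, hP, (ReachRoot.simple 3).reflect 1, ?_⟩
      rw [sRefl_apply_self hc, sRefl_apply_of_ne, sRefl_apply_of_ne, sRefl_apply_of_ne] <;> decide
    | succ N ih =>
      obtain ⟨p, β, hp, hr, h1, h0, h02, h23, hN⟩ := ih
      have hp' := hp.reflect hξ (i := 0) (by decide)
      have hp'' := hp'.reflect hξ (i := 2) (by decide)
      have hs : ∀ γ : Fin 4 → ℤ, ∑ j ∈ Finset.univ.erase (0 : Fin 4), γ j = γ 1 + γ 2 + γ 3 := by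
        intro γ
        rw [show Finset.univ.erase (0 : Fin 4) = {1, 2, 3} by decide]
        simp [add_assoc]
      have hs2 : ∀ γ : Fin 4 → ℤ, ∑ j ∈ Finset.univ.erase (2 : Fin 4), γ j = γ 0 + γ 1 + γ 3 := by
        intro γ
        rw [show Finset.univ.erase (2 : Fin 4) = {0, 1, 3} by decide]
        simp [add_assoc]
      have hs3 : ∀ γ : Fin 4 → ℤ, ∑ j ∈ Finset.univ.erase (3 : Fin 4), γ j = γ 0 + γ 1 + γ 2 := by
        intro γ
        rw [show Finset.univ.erase (3 : Fin 4) = {0, 1, 2} by decide]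
        simp [add_assoc]
      refine ⟨_, _, hp''.reflect hξ (i := 3) (by decide), ((hr.reflect 0).reflect 2).reflect 3, ?_⟩
      have e0 := sRefl_apply_self (hp.cij_eq hξ (i := 0) (by decide)) β
      have e2 := sRefl_apply_self (hp'.cij_eq hξ (i := 2) (by decide)) (sRefl p 0 β)
      have e3 := sRefl_apply_self (hp''.cij_eq hξ (i := 3) (by decide))
        (sRefl (reflectMat p 0) 2 (sRefl p 0 β))
      rw [hs] at e0
      rw [hs2] at e2
      rw [hs3] at e3
      have hne : ∀ (p : Fin 4 → Fin 4 → ℂˣ) (i k : Fin 4) (γ : Fin 4 → ℤ), k ≠ i →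
        sRefl p i γ k = γ k := fun p i k γ hk => sRefl_apply_of_ne p hk γ
      simp only [ne_eq, Fin.reduceEq, not_false_eq_true, hne] at e0 e2 e3 ⊢
      push_cast
      omega
  intro hfin
  obtain ⟨M, hM⟩ := (hfin.2.image fun β => β 3).bddAbove
  obtain ⟨p, β, -, hr, -, -, -, -, hβ⟩ := hroots (M.toNat + 1)
  have := hM ⟨β, ⟨p, hr⟩, rfl⟩
  dsimp only at this
  push_cast at hβ
  have := Int.self_le_toNat M
  omega

theorem not_finiteRootSystem_of_self_eq_one {q : Fin θ → Fin θ → ℂˣ} {i j : Fin θ} (hij : j ≠ i)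
    (hi : (q i i : ℂ) = 1) (h : qtil q i j ≠ 1) : ¬ FiniteRootSystem q := by
  intro hfin
  obtain ⟨n, hn⟩ := hfin.1 q i ⟨_, ReachRoot.simple i⟩ j hij
  simp only [cSet, Set.mem_ofPred_eq, qnum, hi, one_pow, one_mul, Finset.sum_const,
    Finset.card_range, nsmul_eq_mul, mul_one, mul_eq_zero, sub_eq_zero] at hn
  rcases hn with hn | hn
  · exact n.succ_ne_zero (by exact_mod_cast hn)
  · exact h hn.symm

end RootSystems

/-- The bracket `uv - k vu` in an associative algebra. -/
def skewBr {R : Type*} [Ring R] [Algebra ℂ R] (k : ℂ) (u v : R) : R := u * v - k • (v * u)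

/-- Two triples `X`, `Y` in an associative algebra behaving as the images of `x_i ⊗ 1` and
`1 ⊗ x_i` in the braided tensor square of `T(V)/(x_1², x_2², x_3², x_{13})`. -/
structure BraidedTriples {R : Type*} [Ring R] [Algebra ℂ R] (p : Fin 3 → Fin 3 → ℂ)
    (X Y : Fin 3 → R) : Prop where
  left_sq : ∀ i, X i * X i = 0
  right_sq : ∀ i, Y i * Y i = 0
  left_swap : X 2 * X 0 = p 2 0 • (X 0 * X 2)
  right_swap : Y 2 * Y 0 = p 2 0 • (Y 0 * Y 2)
  cross : ∀ i j, Y i * X j = p i j • (X j * Y i)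

namespace BraidedTriples

variable {R : Type*} [Ring R] [Algebra ℂ R] {p : Fin 3 → Fin 3 → ℂ} {X Y : Fin 3 → R}

theorem left_sq_assoc (h : BraidedTriples p X Y) (i : Fin 3) (r : R) : X i * (X i * r) = 0 := by
  rw [← mul_assoc, h.left_sq, zero_mul]

theorem right_sq_assoc (h : BraidedTriples p X Y) (i : Fin 3) (r : R) : Y i * (Y i * r) = 0 := by
  rw [← mul_assoc, h.right_sq, zero_mul]

theorem left_swap_assoc (h : BraidedTriples p X Y) (r : R) :
    X 2 * (X 0 * r) = p 2 0 • (X 0 * (X 2 * r)) := by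
  rw [← mul_assoc, h.left_swap, smul_mul_assoc, mul_assoc]

theorem right_swap_assoc (h : BraidedTriples p X Y) (r : R) :
    Y 2 * (Y 0 * r) = p 2 0 • (Y 0 * (Y 2 * r)) := by
  rw [← mul_assoc, h.right_swap, smul_mul_assoc, mul_assoc]

theorem cross_assoc (h : BraidedTriples p X Y) (i j : Fin 3) (r : R) :
    Y i * (X j * r) = p i j • (X j * (Y i * r)) := by
  rw [← mul_assoc, h.cross, smul_mul_assoc, mul_assoc]

theorem skewBr_pair (h : BraidedTriples p X Y) (i j : Fin 3) :
    skewBr (p i j) ((X + Y) i) ((X + Y) j) =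
      skewBr (p i j) (X i) (X j) + skewBr (p i j) (Y i) (Y j)
        + (1 - p i j * p j i) • (X i * Y j) := by
  simp only [skewBr, Pi.add_apply, mul_add, add_mul, h.cross]
  module

set_option linter.unusedSimpArgs false in
theorem skewBr_triple (h : BraidedTriples p X Y) {ξ : ℂ} (h01 : p 0 1 * p 1 0 = ξ)
    (h12 : p 1 2 * p 2 1 = ξ) (h02 : p 0 2 * p 2 0 = 1) :
    skewBr (p 0 1 * p 0 2) ((X + Y) 0) (skewBr (p 1 2) ((X + Y) 1) ((X + Y) 2)) =
      skewBr (p 0 1 * p 0 2) (X 0) (skewBr (p 1 2) (X 1) (X 2))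
        + skewBr (p 0 1 * p 0 2) (Y 0) (skewBr (p 1 2) (Y 1) (Y 2))
        + (1 - ξ) • (skewBr (p 0 1) (X 0) (X 1) * Y 2)
        + (1 - ξ) • (X 0 * skewBr (p 1 2) (Y 1) (Y 2)) := by
  rw [h.skewBr_pair, h12]
  simp only [skewBr, Pi.add_apply, mul_add, add_mul, mul_sub, sub_mul, smul_mul_assoc,
    mul_smul_comm, mul_assoc, h.left_sq, h.right_sq, h.left_swap, h.right_swap, h.cross,
    h.left_sq_assoc, h.right_sq_assoc, h.left_swap_assoc, h.right_swap_assoc, h.cross_assoc,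
    smul_zero, mul_zero, zero_mul, smul_sub, smul_add, smul_smul]
  clear h
  match_scalars <;> grind

set_option linter.unusedSimpArgs false in
set_option maxHeartbeats 2000000 in
theorem skewBr_u (h : BraidedTriples p X Y) {ξ : ℂ} (hξ : ξ ^ 2 + ξ + 1 = 0) (h00 : p 0 0 = -1)
    (h11 : p 1 1 = -1) (h01 : p 0 1 * p 1 0 = ξ) (h12 : p 1 2 * p 2 1 = ξ)
    (h02 : p 0 2 * p 2 0 = 1) :
    let W : (Fin 3 → R) → R := fun Z =>
      skewBr (p 1 0 * p 0 1 * p 0 2 * p 1 2) (skewBr (p 0 1) (Z 0) (Z 1))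
        (skewBr (p 0 1 * p 0 2) (Z 0) (skewBr (p 1 2) (Z 1) (Z 2)))
    skewBr (p 0 1 ^ 2 * p 2 1) (W (X + Y)) ((X + Y) 1) =
      skewBr (p 0 1 ^ 2 * p 2 1) (W X) (X 1) + skewBr (p 0 1 ^ 2 * p 2 1) (W Y) (Y 1) := by
  intro W
  have hW : W (X + Y) = W X + W Y
      + ((1 - ξ) * (1 - ξ ^ 2)) •
        (skewBr (p 0 1) (X 0) (X 1) * (skewBr (p 0 1) (X 0) (X 1) * Y 2))
      + (ξ * (1 - ξ) ^ 2) • (X 0 * (X 1 * (X 0 * skewBr (p 1 2) (Y 1) (Y 2))))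
      + (ξ * (1 - ξ)) • (skewBr (p 0 1) (X 0) (X 1) *
          skewBr (p 0 1 * p 0 2) (Y 0) (skewBr (p 1 2) (Y 1) (Y 2)))
      + (1 - ξ) • (X 0 * ((ξ * p 1 0 * p 1 2) •
            (skewBr (p 0 1 * p 0 2) (Y 0) (skewBr (p 1 2) (Y 1) (Y 2)) * Y 1)
          + Y 1 * skewBr (p 0 1 * p 0 2) (Y 0) (skewBr (p 1 2) (Y 1) (Y 2))
          - p 1 0 • (skewBr (p 0 1) (Y 0) (Y 1) * skewBr (p 1 2) (Y 1) (Y 2))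
          - (ξ * p 0 2 * p 1 2) •
            (skewBr (p 1 2) (Y 1) (Y 2) * skewBr (p 0 1) (Y 0) (Y 1)))) := by
    simp only [W]
    rw [h.skewBr_triple h01 h12 h02, h.skewBr_pair, h01]
    simp only [skewBr, mul_add, add_mul, mul_sub, sub_mul, smul_mul_assoc,
      mul_smul_comm, mul_assoc, h.left_sq, h.right_sq, h.left_swap, h.right_swap, h.cross,
      h.left_sq_assoc, h.right_sq_assoc, h.left_swap_assoc, h.right_swap_assoc, h.cross_assoc,
      smul_zero, mul_zero, zero_mul, smul_sub, smul_add, smul_smul]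
    clear W h
    match_scalars <;> grind
  rw [hW]
  simp only [W, skewBr, Pi.add_apply, mul_add, add_mul, mul_sub, sub_mul, smul_mul_assoc,
    mul_smul_comm, mul_assoc, h.left_sq, h.right_sq, h.left_swap, h.right_swap, h.cross,
    h.left_sq_assoc, h.right_sq_assoc, h.left_swap_assoc, h.right_swap_assoc, h.cross_assoc,
    smul_zero, mul_zero, zero_mul, smul_sub, smul_add, smul_smul]
  clear hW W h
  match_scalars <;> grind

set_option linter.unusedSimpArgs false in
set_option maxHeartbeats 2000000 in
theorem skewBr_v (h : BraidedTriples p X Y) {ξ : ℂ} (hξ : ξ ^ 2 + ξ + 1 = 0) (h11 : p 1 1 = -1)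
    (h22 : p 2 2 = -1) (h01 : p 0 1 * p 1 0 = ξ) (h12 : p 1 2 * p 2 1 = ξ)
    (h02 : p 0 2 * p 2 0 = 1) :
    let W : (Fin 3 → R) → R := fun Z =>
      skewBr (p 0 1 * p 0 2 * p 1 2 * p 2 1)
        (skewBr (p 0 1 * p 0 2) (Z 0) (skewBr (p 1 2) (Z 1) (Z 2))) (skewBr (p 1 2) (Z 1) (Z 2))
    skewBr (p 0 1 * p 2 1 ^ 2) (W (X + Y)) ((X + Y) 1) =
      skewBr (p 0 1 * p 2 1 ^ 2) (W X) (X 1) + skewBr (p 0 1 * p 2 1 ^ 2) (W Y) (Y 1) := by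
  intro W
  have hW : W (X + Y) = W X + W Y
      + (1 - ξ) • ((skewBr (p 0 1 * p 0 2) (X 0) (skewBr (p 1 2) (X 1) (X 2)) * X 1
          + (ξ * p 0 1 * p 2 1) •
            (X 1 * skewBr (p 0 1 * p 0 2) (X 0) (skewBr (p 1 2) (X 1) (X 2)))
          - p 2 1 • (skewBr (p 0 1) (X 0) (X 1) * skewBr (p 1 2) (X 1) (X 2))
          - (ξ * p 0 1 * p 0 2) •
            (skewBr (p 1 2) (X 1) (X 2) * skewBr (p 0 1) (X 0) (X 1))) * Y 2)
      + (ξ * (1 - ξ)) • (skewBr (p 0 1 * p 0 2) (X 0) (skewBr (p 1 2) (X 1) (X 2)) *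
          skewBr (p 1 2) (Y 1) (Y 2))
      + ((1 - ξ) * (1 - ξ ^ 2)) •
        (X 0 * (skewBr (p 1 2) (Y 1) (Y 2) * skewBr (p 1 2) (Y 1) (Y 2)))
      + (ξ * (1 - ξ) ^ 2) • (skewBr (p 0 1) (X 0) (X 1) * (Y 2 * (Y 1 * Y 2))) := by
    simp only [W]
    rw [h.skewBr_triple h01 h12 h02, h.skewBr_pair, h12]
    simp only [skewBr, mul_add, add_mul, mul_sub, sub_mul, smul_mul_assoc,
      mul_smul_comm, mul_assoc, h.left_sq, h.right_sq, h.left_swap, h.right_swap, h.cross,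
      h.left_sq_assoc, h.right_sq_assoc, h.left_swap_assoc, h.right_swap_assoc, h.cross_assoc,
      smul_zero, mul_zero, zero_mul, smul_sub, smul_add, smul_smul]
    clear W h
    match_scalars <;> grind
  rw [hW]
  simp only [W, skewBr, Pi.add_apply, mul_add, add_mul, mul_sub, sub_mul, smul_mul_assoc,
    mul_smul_comm, mul_assoc, h.left_sq, h.right_sq, h.left_swap, h.right_swap, h.cross,
    h.left_sq_assoc, h.right_sq_assoc, h.left_swap_assoc, h.right_swap_assoc, h.cross_assoc,
    smul_zero, mul_zero, zero_mul, smul_sub, smul_add, smul_smul]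
  clear hW W h
  match_scalars <;> grind

end BraidedTriples

section Extension

variable {θ : ℕ} {q : Fin θ → Fin θ → ℂˣ} {S : BraidedStr θ q} {I : Submodule ℂ (TV θ)}

/-- The simple roots together with an additional degree `β`. -/
def extDeg (β : Fin θ → ℕ) : Fin (θ + 1) → Fin θ → ℕ := Fin.snoc (δ θ) β

/-- The braiding matrix of `V` extended by a vector of degree `β`. -/
def extMat (q : Fin θ → Fin θ → ℂˣ) (β : Fin θ → ℕ) : Fin (θ + 1) → Fin (θ + 1) → ℂˣ :=
  fun j k => ∏ a, ∏ b, q a b ^ (extDeg β j a * extDeg β k b)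

theorem extMat_eq_qf (q : Fin θ → Fin θ → ℂˣ) (β : Fin θ → ℕ) (j k : Fin (θ + 1)) :
    (extMat q β j k : ℂ) = qf q (extDeg β j) (extDeg β k) := by
  simp [extMat, qf]

theorem coord_homogTot_eq_zero {n : ℕ} (hn : 2 ≤ n) {x : TV θ} (hx : x ∈ homogTot θ n)
    (i : Fin θ) : coord i x = 0 := by
  rw [← evalW_singleton (q := fun _ _ => 1)]
  exact evalW_homogTot_eq_zero hx (by simp; omega)

theorem counit_homogTot_eq_zero {n : ℕ} (hn : 1 ≤ n) {x : TV θ} (hx : x ∈ homogTot θ n) :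
    counit θ x = 0 :=
  evalW_homogTot_eq_zero (q := fun _ _ => 1) hx (w := []) (by simp; omega)

/-- A primitive element of degree at least two which is nonzero in a pre-Nichols algebra of
finite GKdim yields a larger braided vector space with finite root system. -/
theorem IsPreNicholsIdeal.finiteRootSystem_extMat (hI : IsPreNicholsIdeal S I) (hGK : FinGK I)
    (hAAH : AAH) {β : Fin θ → ℕ} {y : TV θ} (hy : y ∈ homogD θ β) (hβ : 2 ≤ ∑ k, β k)
    (hp : hI.IsPrim y) (hyI : y ∉ I) : FiniteRootSystem (extMat q β) := by
  have hyT := homogD_le_homogTot β hy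
  have hy0 : counit θ y = 0 := counit_homogTot_eq_zero (by omega) hyT
  have hyW : y ∉ I ⊔ Wfil θ 1 := by
    intro h
    obtain ⟨a, ha, v, hv, rfl⟩ := Submodule.mem_sup.1 h
    have hv0 : v = 0 := by
      refine eq_zero_of_mem_Wfil_one hv ?_ fun i => ?_
      · rwa [map_add, hI.counit_eq_zero ha, zero_add] at hy0
      · have := coord_homogTot_eq_zero hβ hyT i
        rwa [map_add, hI.coord_eq_zero ha, zero_add] at this
    rw [hv0, add_zero] at hyI
    exact hyI ha
  obtain ⟨g, hgy, hg⟩ := Submodule.exists_le_ker_of_notMem hyW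
  have hg1 : g 1 = 0 := hg (Submodule.mem_sup_right (Submodule.subset_span ⟨[], by simp, by simp⟩))
  have hgen : ∀ j, g (gen θ j) = 0 := fun j =>
    hg (Submodule.mem_sup_right (Submodule.subset_span ⟨[j], by simp, by simp [wordElem]⟩))
  refine hAAH _ _ (braidedStr (extMat q β)) (hI.finGK_Jq hGK _ (e := extDeg β)
    (y := Fin.snoc (gen θ) y) (f := Fin.snoc coord ((g y)⁻¹ • g)) ?_ (extMat_eq_qf q β)
    ?_ ?_ ?_ ?_ ?_)
  · intro j
    cases j using Fin.lastCases with
    | last => simpa [extDeg] using hy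
    | cast j => simpa [extDeg] using gen_mem_homogD j
  · intro j
    cases j using Fin.lastCases with
    | last => simpa using hp
    | cast j => simpa using show hI.IsPrim (gen θ j) from hI.actΔ_gen j
  · intro j
    cases j using Fin.lastCases with
    | last => simpa using hy0
    | cast j => simp [counit_gen]
  · intro j x hx
    cases j using Fin.lastCases with
    | last => simp [show g x = 0 from hg (Submodule.mem_sup_left hx)]
    | cast j => simpa using hI.coord_eq_zero hx j
  · intro j
    cases j using Fin.lastCases with
    | last => simp [hg1]
    | cast j => simp [coord_one]
  · intro i j
    cases i using Fin.lastCases with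
    | last =>
      cases j using Fin.lastCases with
      | last => simp [hgy]
      | cast j => simp [hgen, Fin.castSucc_ne_last]
    | cast i =>
      cases j using Fin.lastCases with
      | last => simp [coord_homogTot_eq_zero hβ hyT, (Fin.castSucc_ne_last i).symm]
      | cast j => simp [coord_gen]

end Extension

section TypeG

/-- The braiding matrix `q` is of type `g(2,3)` with all vertices `-1` and both edges `ξ`. -/
structure IsTypeG (q : Fin 3 → Fin 3 → ℂˣ) (ξ : ℂ) : Prop where
  prim : IsPrimitiveRoot ξ 3
  diag : ∀ i, (q i i : ℂ) = -1
  til01 : qtil q 0 1 = ξ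
  til12 : qtil q 1 2 = ξ
  til02 : qtil q 0 2 = 1

variable {q : Fin 3 → Fin 3 → ℂˣ} {S : BraidedStr 3 q} {I : Submodule ℂ (TV 3)} {ξ : ℂ}

theorem mem_of_isPrim_of_qf_self_eq_one (hI : IsPreNicholsIdeal S I) (hGK : FinGK I)
    (hAAH : AAH) {β : Fin 3 → ℕ} {y : TV 3} (hy : y ∈ homogD 3 β)
    (hβ : 2 ≤ ∑ k, β k) (hp : hI.IsPrim y) (h1 : qf q β β = 1) (j : Fin 3)
    (hj : qf q β (δ 3 j) * qf q (δ 3 j) β ≠ 1) : y ∈ I := by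
  by_contra hyI
  have hj' : extDeg β j.castSucc = δ 3 j := by simp [extDeg]
  have h3 : extDeg β (Fin.last 3) = β := rfl
  refine not_finiteRootSystem_of_self_eq_one (i := Fin.last 3) (Fin.castSucc_ne_last j) ?_ ?_
    (hI.finiteRootSystem_extMat hGK hAAH hy hβ hp hyI)
  · rw [extMat_eq_qf, h3, h1]
  · rwa [qtil, extMat_eq_qf, extMat_eq_qf, h3, hj']

namespace IsTypeG

theorem qf_mul_swap (h : IsTypeG q ξ) (a b : Fin 3 → ℕ) :
    qf q a b * qf q b a = ξ ^ (a 0 * b 1 + a 1 * b 0 + a 1 * b 2 + a 2 * b 1) := by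
  have h1 : ∀ n : ℕ, (-1 : ℂ) ^ n * (-1) ^ n = 1 := fun n => by rw [← mul_pow]; simp
  have key : qf q a b * qf q b a =
      (-1) ^ (a 0 * b 0) * (-1) ^ (a 0 * b 0) * ((-1) ^ (a 1 * b 1) * (-1) ^ (a 1 * b 1))
        * ((-1) ^ (a 2 * b 2) * (-1) ^ (a 2 * b 2)) * qtil q 0 1 ^ (a 0 * b 1 + a 1 * b 0)
        * qtil q 0 2 ^ (a 0 * b 2 + a 2 * b 0) * qtil q 1 2 ^ (a 1 * b 2 + a 2 * b 1) := by
    simp only [qf, Fin.prod_univ_three, h.diag, qtil, mul_pow, pow_add]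
    simp only [mul_comm (b _) (a _)]
    ring
  rw [key, h.til01, h.til02, h.til12]
  simp only [h1, one_pow]
  ring

theorem qf_self (h : IsTypeG q ξ) (a : Fin 3 → ℕ) :
    qf q a a = (-1) ^ (a 0 * a 0 + a 1 * a 1 + a 2 * a 2) * ξ ^ (a 0 * a 1 + a 1 * a 2) := by
  have key : qf q a a = (-1) ^ (a 0 * a 0) * (-1) ^ (a 1 * a 1) * (-1) ^ (a 2 * a 2)
        * qtil q 0 1 ^ (a 0 * a 1) * qtil q 0 2 ^ (a 0 * a 2) * qtil q 1 2 ^ (a 1 * a 2) := by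
    simp only [qf, Fin.prod_univ_three, h.diag, qtil, mul_pow]
    rw [mul_comm (a 1) (a 0), mul_comm (a 2) (a 0), mul_comm (a 2) (a 1)]
    ring
  rw [key, h.til01, h.til02, h.til12]
  ring

theorem mem_of_isPrim_of_star (h : IsTypeG q ξ) (hI : IsPreNicholsIdeal S I)
    (hGK : FinGK I) (hAAH : AAH) {β : Fin 3 → ℕ} {y : TV 3} (hy : y ∈ homogD 3 β)
    (hp : hI.IsPrim y) (h1 : β 1 = 3) (h02 : β 0 + β 2 = 4) : y ∈ I := by
  by_contra hyI
  have hξ3 := h.prim.pow_eq_one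
  have hodd : ∀ a b : ℕ, a + b = 4 → Odd (a * a + 3 * 3 + b * b) := by
    intro a b hab
    obtain rfl : b = 4 - a := by omega
    have : a ≤ 4 := by omega
    interval_cases a <;> decide
  have e0 : extDeg β 0 = δ 3 0 := rfl
  have e1 : extDeg β 1 = δ 3 1 := rfl
  have e2 : extDeg β 2 = δ 3 2 := rfl
  have e3 : extDeg β 3 = β := rfl
  have hsymm : ∀ j k, qtil (extMat q β) j k = qtil (extMat q β) k j := fun j k => mul_comm _ _
  have htil : ∀ j k, qtil (extMat q β) j k =
      qf q (extDeg β j) (extDeg β k) * qf q (extDeg β k) (extDeg β j) := fun j k => by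
    rw [qtil, extMat_eq_qf, extMat_eq_qf]
  have t01 : qtil (extMat q β) 0 1 = ξ := by rw [htil, e0, e1, h.qf_mul_swap]; simp [δ]
  have t12 : qtil (extMat q β) 1 2 = ξ := by rw [htil, e1, e2, h.qf_mul_swap]; simp [δ]
  have t02 : qtil (extMat q β) 0 2 = 1 := by rw [htil, e0, e2, h.qf_mul_swap]; simp [δ]
  have t03 : qtil (extMat q β) 0 3 = 1 := by
    rw [htil, e0, e3, h.qf_mul_swap]; simp [δ, h1, hξ3]
  have t23 : qtil (extMat q β) 2 3 = 1 := by
    rw [htil, e2, e3, h.qf_mul_swap]; simp [δ, h1, hξ3]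
  have t13 : qtil (extMat q β) 1 3 = ξ := by
    rw [htil, e1, e3, h.qf_mul_swap]
    simp only [δ, Fin.isValue, Fin.reduceEq, if_true, if_false, zero_mul, one_mul, zero_add,
      add_zero, h02]
    rw [pow_succ, hξ3, one_mul]
  refine not_finiteRootSystem_star h.prim (fun i => ?_) (fun j hj => ?_) (fun j k hj hk hjk => ?_)
    (hI.finiteRootSystem_extMat hGK hAAH hy (by rw [Fin.sum_univ_three]; omega) hp hyI)
  · rw [extMat_eq_qf, h.qf_self]
    fin_cases i
    · simp [e0, δ]
    · simp [e1, δ]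
    · simp [e2, δ]
    · have h0 : β 0 * 3 + 3 * β 2 = 3 * 4 := by omega
      simp only [Fin.reduceFinMk, e3, h1, h0]
      rw [pow_mul, hξ3, one_pow, mul_one]
      exact (hodd _ _ h02).neg_one_pow
  · fin_cases j
    · exact (hsymm _ _).trans t01
    · exact absurd rfl hj
    · exact t12
    · exact t13
  · fin_cases j <;> fin_cases k <;>
      first
        | exact absurd rfl hjk
        | exact absurd rfl hj
        | exact absurd rfl hk
        | assumption
        | (rw [hsymm]; assumption)

theorem gen_mul_self_mem (h : IsTypeG q ξ) (hI : IsPreNicholsIdeal S I) (hGK : FinGK I)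
    (hAAH : AAH) (i : Fin 3) : gen 3 i * gen 3 i ∈ I := by
  have hξ1 : ξ ^ 2 ≠ 1 := h.prim.pow_ne_one_of_pos_of_lt (by norm_num) (by norm_num)
  have hqf : qf q (δ 3 i) (δ 3 i) = -1 := by rw [h.qf_self]; fin_cases i <;> simp [δ]
  have hprim : hI.IsPrim (brk q (δ 3 i) (δ 3 i) (gen 3 i) (gen 3 i)) :=
    hI.isPrim_brk (gen_mem_homogD i) (gen_mem_homogD i) (hI.actΔ_gen i) (hI.actΔ_gen i)
      (by rw [hqf]; norm_num)
  have hmem : brk q (δ 3 i) (δ 3 i) (gen 3 i) (gen 3 i) ∈ I := by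
    refine mem_of_isPrim_of_qf_self_eq_one hI hGK hAAH
      (brk_mem_homogD q (gen_mem_homogD i) (gen_mem_homogD i)) ?_ hprim ?_
      (if i = 1 then 0 else 1) ?_
    · fin_cases i <;> simp [Fin.sum_univ_three, δ]
    · rw [h.qf_self]; fin_cases i <;> simp [δ] <;> norm_num
    · rw [h.qf_mul_swap]; fin_cases i <;> simpa [δ] using hξ1
  have h2 : brk q (δ 3 i) (δ 3 i) (gen 3 i) (gen 3 i) = (2 : ℂ) • (gen 3 i * gen 3 i) := by
    rw [brk, hqf]; module
  rw [h2] at hmem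
  exact (Submodule.smul_mem_iff _ two_ne_zero).1 hmem

theorem brk_zero_two_mem (h : IsTypeG q ξ) (hI : IsPreNicholsIdeal S I) (hGK : FinGK I)
    (hAAH : AAH) : brk q (δ 3 0) (δ 3 2) (gen 3 0) (gen 3 2) ∈ I := by
  have hξ1 : ξ ^ 2 ≠ 1 := h.prim.pow_ne_one_of_pos_of_lt (by norm_num) (by norm_num)
  refine mem_of_isPrim_of_qf_self_eq_one hI hGK hAAH
    (brk_mem_homogD q (gen_mem_homogD 0) (gen_mem_homogD 2)) (by simp [Fin.sum_univ_three, δ])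
    (hI.isPrim_brk (gen_mem_homogD 0) (gen_mem_homogD 2) (hI.actΔ_gen 0) (hI.actΔ_gen 2) ?_) ?_
    1 ?_
  · rw [h.qf_mul_swap]; simp [δ]
  · rw [h.qf_self]; simp [δ]
  · rw [h.qf_mul_swap]; simpa [δ] using hξ1

end IsTypeG

end TypeG

section RootVectors

variable {q : Fin 3 → Fin 3 → ℂˣ} {S : BraidedStr 3 q} {I : Submodule ℂ (TV 3)} {ξ : ℂ}

theorem xw_mem_homogD {θ : ℕ} (q : Fin θ → Fin θ → ℂˣ) (w : List (Fin θ)) :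
    xw q w ∈ homogD θ (degW θ w) := by
  match w with
  | [] => exact Submodule.subset_span ⟨[], rfl, by simp [xw]⟩
  | [i] => exact Submodule.subset_span ⟨[i], rfl, by simp [xw, wordElem]⟩
  | i :: j :: w =>
    rw [degW_cons]
    exact brk_mem_homogD q (gen_mem_homogD i) (xw_mem_homogD q (j :: w))

theorem mem_homogD_of_brk (q : Fin 3 → Fin 3 → ℂˣ) {a b c : Fin 3 → ℕ} {u v : TV 3}
    (hu : u ∈ homogD 3 a) (hv : v ∈ homogD 3 b) (hc : a + b = c) :
    brk q a b u v ∈ homogD 3 c :=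
  hc ▸ brk_mem_homogD q hu hv

theorem gen_zero_mem : gen 3 0 ∈ homogD 3 ![1, 0, 0] := by
  convert gen_mem_homogD (0 : Fin 3) using 2; decide

theorem gen_one_mem : gen 3 1 ∈ homogD 3 ![0, 1, 0] := by
  convert gen_mem_homogD (1 : Fin 3) using 2; decide

theorem gen_two_mem : gen 3 2 ∈ homogD 3 ![0, 0, 1] := by
  convert gen_mem_homogD (2 : Fin 3) using 2; decide

theorem xu231_mem (q : Fin 3 → Fin 3 → ℂˣ) : xu231 q ∈ homogD 3 ![2, 3, 1] := by
  have h01 : xw q [0, 1] ∈ homogD 3 ![1, 1, 0] := by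
    convert xw_mem_homogD q [0, 1] using 2; decide
  have h012 : xw q [0, 1, 2] ∈ homogD 3 ![1, 1, 1] := by
    convert xw_mem_homogD q [0, 1, 2] using 2; decide
  exact mem_homogD_of_brk q (mem_homogD_of_brk q h01 h012 (by decide)) gen_one_mem (by decide)

theorem xv132_mem (q : Fin 3 → Fin 3 → ℂˣ) : xv132 q ∈ homogD 3 ![1, 3, 2] := by
  have h12 : xw q [1, 2] ∈ homogD 3 ![0, 1, 1] := by
    convert xw_mem_homogD q [1, 2] using 2; decide
  have h012 : xw q [0, 1, 2] ∈ homogD 3 ![1, 1, 1] := by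
    convert xw_mem_homogD q [0, 1, 2] using 2; decide
  exact mem_homogD_of_brk q (mem_homogD_of_brk q h012 h12 (by decide)) gen_one_mem (by decide)

theorem map_brk {θ : ℕ} {R : Type*} [Ring R] [Algebra ℂ R] (φ : TV θ →ₐ[ℂ] R)
    (q : Fin θ → Fin θ → ℂˣ) (a b : Fin θ → ℕ) (u v : TV θ) :
    φ (brk q a b u v) = skewBr (qf q a b) (φ u) (φ v) := by
  simp [brk, skewBr]

namespace IsTypeG

theorem map_xw_two {R : Type*} [Ring R] [Algebra ℂ R] (φ : TV 3 →ₐ[ℂ] R)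
    (i j : Fin 3) : φ (xw q [i, j]) = skewBr (q i j : ℂ) (φ (gen 3 i)) (φ (gen 3 j)) := by
  have : qf q (δ 3 i) (degW 3 [j]) = q i j := by
    rw [show degW 3 [j] = δ 3 j by revert j; decide, qf_eq_prod_chi]
    simp [δ, chi]
  rw [← this, ← map_brk]
  rfl

theorem map_xw_three {R : Type*} [Ring R] [Algebra ℂ R] (φ : TV 3 →ₐ[ℂ] R) :
    φ (xw q [0, 1, 2]) = skewBr ((q 0 1 : ℂ) * q 0 2) (φ (gen 3 0))
      (skewBr (q 1 2 : ℂ) (φ (gen 3 1)) (φ (gen 3 2))) := by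
  have : qf q (δ 3 0) (degW 3 [1, 2]) = (q 0 1 : ℂ) * q 0 2 := by
    rw [show degW 3 [1, 2] = ![0, 1, 1] by decide]
    simp [qf, Fin.prod_univ_three, δ]
  rw [← map_xw_two, ← this, ← map_brk]
  rfl

theorem map_xu231 (h : IsTypeG q ξ) {R : Type*} [Ring R] [Algebra ℂ R] (φ : TV 3 →ₐ[ℂ] R) :
    φ (xu231 q) = skewBr ((q 0 1 : ℂ) ^ 2 * q 2 1)
      (skewBr ((q 1 0 : ℂ) * q 0 1 * q 0 2 * q 1 2)
        (skewBr (q 0 1 : ℂ) (φ (gen 3 0)) (φ (gen 3 1)))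
        (skewBr ((q 0 1 : ℂ) * q 0 2) (φ (gen 3 0))
          (skewBr (q 1 2 : ℂ) (φ (gen 3 1)) (φ (gen 3 2))))) (φ (gen 3 1)) := by
  have e1 : qf q ![1, 1, 0] ![1, 1, 1] = (q 1 0 : ℂ) * q 0 1 * q 0 2 * q 1 2 := by
    simp [qf, Fin.prod_univ_three, h.diag]
    ring
  have e2 : qf q ![2, 2, 1] ![0, 1, 0] = (q 0 1 : ℂ) ^ 2 * q 2 1 := by
    simp [qf, Fin.prod_univ_three, h.diag]
  rw [xu231, map_brk, map_brk, map_xw_two, map_xw_three, e1, e2]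

theorem map_xv132 (h : IsTypeG q ξ) {R : Type*} [Ring R] [Algebra ℂ R] (φ : TV 3 →ₐ[ℂ] R) :
    φ (xv132 q) = skewBr ((q 0 1 : ℂ) * (q 2 1 : ℂ) ^ 2)
      (skewBr ((q 0 1 : ℂ) * q 0 2 * q 1 2 * q 2 1)
        (skewBr ((q 0 1 : ℂ) * q 0 2) (φ (gen 3 0))
          (skewBr (q 1 2 : ℂ) (φ (gen 3 1)) (φ (gen 3 2))))
        (skewBr (q 1 2 : ℂ) (φ (gen 3 1)) (φ (gen 3 2)))) (φ (gen 3 1)) := by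
  have e1 : qf q ![1, 1, 1] ![0, 1, 1] = (q 0 1 : ℂ) * q 0 2 * q 1 2 * q 2 1 := by
    simp [qf, Fin.prod_univ_three, h.diag]
  have e2 : qf q ![1, 2, 2] ![0, 1, 0] = (q 0 1 : ℂ) * (q 2 1 : ℂ) ^ 2 := by
    simp [qf, Fin.prod_univ_three, h.diag]
  rw [xv132, map_brk, map_brk, map_xw_two, map_xw_three, e1, e2]

theorem sq_add_self_add_one (h : IsTypeG q ξ) : ξ ^ 2 + ξ + 1 = 0 := by
  have h1 : ξ - 1 ≠ 0 := sub_ne_zero.2 (h.prim.ne_one (by norm_num))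
  refine (mul_eq_zero.1 ?_).resolve_left h1
  linear_combination h.prim.pow_eq_one

theorem braidedTriples (h : IsTypeG q ξ) (hI : IsPreNicholsIdeal S I) (hGK : FinGK I)
    (hAAH : AAH) : BraidedTriples (fun i j => (q i j : ℂ)) (fun i => hI.actX (gen 3 i))
      (fun i => hI.actY (gen 3 i)) := by
  have hX : ∀ u ∈ I, hI.actX u = 0 := fun u hu => by
    rw [hI.actX_eq, hI.quoL_eq_zero hu, TensorProduct.map_zero_left]
  have hY : ∀ (β : Fin 3 → ℕ), ∀ u ∈ homogD 3 β, u ∈ I → hI.actY u = 0 := fun β u hu huI => by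
    rw [hI.actY_eq hu, hI.quoL_eq_zero huI, TensorProduct.map_zero_right]
  have hqf : ∀ i j, qf q (δ 3 i) (δ 3 j) = q i j := fun i j => by
    rw [qf_eq_prod_chi]
    simp [δ, chi]
  have h20 : (q 2 0 : ℂ) * q 0 2 = 1 := by rw [← h.til02, qtil, mul_comm]
  have hswap : ∀ φ : TV 3 →ₐ[ℂ] Module.End ℂ ((TV 3 ⧸ I) ⊗[ℂ] (TV 3 ⧸ I)),
      φ (brk q (δ 3 0) (δ 3 2) (gen 3 0) (gen 3 2)) = 0 →
        φ (gen 3 2) * φ (gen 3 0) = (q 2 0 : ℂ) • (φ (gen 3 0) * φ (gen 3 2)) := fun φ hφ => by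
    rw [brk, map_sub, map_smul, map_mul, map_mul, hqf, sub_eq_zero] at hφ
    rw [hφ, smul_smul, h20, one_smul]
  have hsq := h.gen_mul_self_mem hI hGK hAAH
  have h02 := h.brk_zero_two_mem hI hGK hAAH
  refine ⟨fun i => ?_, fun i => ?_, hswap _ (hX _ h02),
    hswap _ (hY _ _ (brk_mem_homogD q (gen_mem_homogD 0) (gen_mem_homogD 2)) h02), fun i j => ?_⟩
  · rw [← map_mul, hX _ (hsq i)]
  · rw [← map_mul, hY _ _ (mul_mem_homogD (gen_mem_homogD i) (gen_mem_homogD i)) (hsq i)]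
  · rw [hI.actY_mul_actX (gen_mem_homogD i) (gen_mem_homogD j), hqf]

theorem map_xu231_add (h : IsTypeG q ξ) {R : Type*} [Ring R] [Algebra ℂ R]
    {φ ψ χ : TV 3 →ₐ[ℂ] R} (hφ : ∀ i, φ (gen 3 i) = ψ (gen 3 i) + χ (gen 3 i))
    (hT : BraidedTriples (fun i j => (q i j : ℂ)) (fun i => ψ (gen 3 i)) fun i => χ (gen 3 i)) :
    φ (xu231 q) = ψ (xu231 q) + χ (xu231 q) := by
  rw [h.map_xu231, h.map_xu231, h.map_xu231, hφ, hφ, hφ]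
  exact hT.skewBr_u h.sq_add_self_add_one (h.diag 0) (h.diag 1) h.til01 h.til12 h.til02

theorem map_xv132_add (h : IsTypeG q ξ) {R : Type*} [Ring R] [Algebra ℂ R]
    {φ ψ χ : TV 3 →ₐ[ℂ] R} (hφ : ∀ i, φ (gen 3 i) = ψ (gen 3 i) + χ (gen 3 i))
    (hT : BraidedTriples (fun i j => (q i j : ℂ)) (fun i => ψ (gen 3 i)) fun i => χ (gen 3 i)) :
    φ (xv132 q) = ψ (xv132 q) + χ (xv132 q) := by
  rw [h.map_xv132, h.map_xv132, h.map_xv132, hφ, hφ, hφ]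
  exact hT.skewBr_v h.sq_add_self_add_one (h.diag 1) (h.diag 2) h.til01 h.til12 h.til02

theorem isPrim_xu231 (h : IsTypeG q ξ) (hI : IsPreNicholsIdeal S I) (hGK : FinGK I)
    (hAAH : AAH) : hI.IsPrim (xu231 q) :=
  h.map_xu231_add hI.actΔ_gen (h.braidedTriples hI hGK hAAH)

theorem isPrim_xv132 (h : IsTypeG q ξ) (hI : IsPreNicholsIdeal S I) (hGK : FinGK I)
    (hAAH : AAH) : hI.IsPrim (xv132 q) :=
  h.map_xv132_add hI.actΔ_gen (h.braidedTriples hI hGK hAAH)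

theorem brk_mem (h : IsTypeG q ξ) (hI : IsPreNicholsIdeal S I) (hGK : FinGK I) (hAAH : AAH)
    {a b : Fin 3 → ℕ} {u v : TV 3} (hu : u ∈ homogD 3 a) (hv : v ∈ homogD 3 b)
    (pu : hI.IsPrim u) (pv : hI.IsPrim v)
    (hab : a 0 * b 1 + a 1 * b 0 + a 1 * b 2 + a 2 * b 1 = 3) (h1 : a 1 + b 1 = 3)
    (h02 : a 0 + b 0 + (a 2 + b 2) = 4) : brk q a b u v ∈ I :=
  h.mem_of_isPrim_of_star hI hGK hAAH (brk_mem_homogD q hu hv)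
    (hI.isPrim_brk hu hv pu pv (by rw [h.qf_mul_swap, hab, h.prim.pow_eq_one])) h1 h02

end IsTypeG

end RootVectors

/-- Lemma 4.1: for `q` of type `g(2,3)` with Dynkin diagram
`(-1) —ξ— (-1) —ξ— (-1)`, `ξ ∈ G₃'`, the relations
`[x_1,x_u]_c = [x_v,x_3]_c = [x_u,x_3]_c = [x_1,x_v]_c = 0` hold in every
pre-Nichols algebra of `q` with finite GKdim. -/
theorem statement_17 (q : Fin 3 → Fin 3 → ℂˣ) (S : BraidedStr 3 q) (ξ : ℂ)
    (hξ : IsPrimitiveRoot ξ 3)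
    (h11 : (q 0 0 : ℂ) = -1) (h22 : (q 1 1 : ℂ) = -1) (h33 : (q 2 2 : ℂ) = -1)
    (h12 : qtil q 0 1 = ξ) (h23 : qtil q 1 2 = ξ) (h13 : qtil q 0 2 = 1)
    (hAAH : AAH)
    (I : Submodule ℂ (TV 3)) (hI : IsPreNicholsIdeal S I) (hGK : FinGK I) :
    brk q ![1, 0, 0] ![2, 3, 1] (gen 3 0) (xu231 q) ∈ I ∧
    brk q ![1, 3, 2] ![0, 0, 1] (xv132 q) (gen 3 2) ∈ I ∧
    brk q ![2, 3, 1] ![0, 0, 1] (xu231 q) (gen 3 2) ∈ I ∧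
    brk q ![1, 0, 0] ![1, 3, 2] (gen 3 0) (xv132 q) ∈ I := by
  have h : IsTypeG q ξ := ⟨hξ, fun i => by fin_cases i <;> assumption, h12, h23, h13⟩
  have pu := h.isPrim_xu231 hI hGK hAAH
  have pv := h.isPrim_xv132 hI hGK hAAH
  exact ⟨h.brk_mem hI hGK hAAH gen_zero_mem (xu231_mem q) (hI.actΔ_gen 0) pu rfl rfl rfl,
    h.brk_mem hI hGK hAAH (xv132_mem q) gen_two_mem pv (hI.actΔ_gen 2) rfl rfl rfl,
    h.brk_mem hI hGK hAAH (xu231_mem q) gen_two_mem pu (hI.actΔ_gen 2) rfl rfl rfl,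
    h.brk_mem hI hGK hAAH gen_zero_mem (xv132_mem q) (hI.actΔ_gen 0) pv rfl rfl rfl⟩

end PreNicholsPaper
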